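/- arXiv:math/0103044 — 2 statements merged into one kernel-verified Lean document; each statement's English description precedes it below -/
import Mathlib

section
/- Let (S,T) be modular data on Φ, let N ≥ 1 be the exact order of T (Tᴺ = I and N minimal), and let ρ : SL₂(ℤ) → GL(Φ,ℂ) be a group homomorphism with ρ([[0,-1],[1,0]]) = S and ρ([[1,1],[0,1]]) = T. Let p ∈ {2,3} with p not dividing N. Suppose there exist a permutation g of Φ, a function ε : Φ → {1,-1}, and a ring automorphism τ of ℂ such that τ(S_{ab}) = ε(a) S_{ga,b} = ε(b) S_{a,gb} and τ(T_{aa}) = T_{aa}^p for all a, b ∈ Φ, and suppose T_{ga,ga} = T_{aa}^{p²} for all a ∈ Φ. Then ρ(A) is the identity matrix for every A ∈ SL₂(ℤ) with A ≡ I (mod N); that is, ρ factors through the principal congruence subgroup Γ(N) and hence defines a representation of SL₂(ℤ/Nℤ). -/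
open scoped BigOperators
open Complex

/-- Modular data on a finite set `Φ` with distinguished element `zero`: a unitary symmetric
matrix `S`, a diagonal matrix `T` of finite order, with the `zero`-row of `S` real and
strictly positive, `S² = (ST)³`, and nonnegative-integer fusion coefficients `N a b c` given
by Verlinde's formula. -/
structure ModularData (Φ : Type) [Fintype Φ] [DecidableEq Φ] where
  zero : Φ
  S : Matrix Φ Φ ℂ
  T : Matrix Φ Φ ℂ
  N : Φ → Φ → Φ → ℕ
  S_unitary : S * S.conjTranspose = 1
  S_symm : ∀ a b, S a b = S b a
  T_diag : ∀ a b, a ≠ b → T a b = 0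
  T_order : ∃ m : ℕ, 0 < m ∧ T ^ m = 1
  S_zero_pos : ∀ a, (S zero a).im = 0 ∧ 0 < (S zero a).re
  modular_rel : S ^ 2 = (S * T) ^ 3
  verlinde : ∀ a b c,
    (N a b c : ℂ) = ∑ d, S a d * S b d * (starRingEnd ℂ) (S c d) / S zero d

/-!
The Galois automorphism `τ` induces an endomorphism `θ` of `GL(Φ, ℂ)` which agrees on the image of
`ρ` with conjugation by `diag(p, 1)`, in the sense that `θ (ρ A) = ρ B` whenever
`diag(p, 1) A = B diag(p, 1)` in `SL₂(ℤ)`: such pairs `(A, B)` are generated by the obvious ones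
through a Euclidean descent, which works because `p < 4`. On the other hand `θ (ρ S) = γ (ρ S)` with
`γ` a signed permutation, and `θ (ρ T) = (ρ T) ^ p`, so a suitable power of `θ` fixes the image of
`ρ`, which gives `ρ A = ρ (l (A 1 0)) ρ (u (A 0 1))` whenever `A 0 0` is a power of a suitable
`U = p ^ k`, where `u` and `l` are the upper and lower elementary matrices.

These identities show that the images of the elementary matrices, which only depend on their entries
mod `N`, satisfy the relations of a rank one Steinberg group over `ZMod N`. Such a family extends to
a representation of `SL₂(ZMod N)` as soon as its torus `h` is multiplicative on the units of each
local factor, by the uniqueness of the Bruhat decomposition. For an odd prime power the units are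
cyclic and multiplicativity follows from the relation `h (x y) = h x * h y` for `x + y = 1`. For a
power of two, where `p = 3`, the units are generated by `-1` and `3`, and `h (3⁻¹) = γ⁻¹`.
-/

open scoped MatrixGroups

section ElementaryMatrices

variable {R : Type*} [CommRing R]

lemma coe_SL_injective :
    Function.Injective (fun A : SL(2, R) => (A : Matrix (Fin 2) (Fin 2) R)) :=
  Subtype.coe_injective

/-- The upper elementary matrix `[[1, x], [0, 1]]`. -/
def upperSL (x : R) : SL(2, R) :=
  ⟨!![1, x; 0, 1], by simp⟩

/-- The lower elementary matrix `[[1, 0], [x, 1]]`. -/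
def lowerSL (x : R) : SL(2, R) :=
  ⟨!![1, 0; x, 1], by simp⟩

@[simp]
lemma coe_upperSL (x : R) : (upperSL x : Matrix (Fin 2) (Fin 2) R) = !![1, x; 0, 1] := rfl

@[simp]
lemma coe_lowerSL (x : R) : (lowerSL x : Matrix (Fin 2) (Fin 2) R) = !![1, 0; x, 1] := rfl

lemma map_upperSL {R' : Type*} [CommRing R'] (f : R →+* R') (x : R) :
    Matrix.SpecialLinearGroup.map f (upperSL x) = upperSL (f x) := by
  ext i j
  fin_cases i <;> fin_cases j <;> simp

lemma map_lowerSL {R' : Type*} [CommRing R'] (f : R →+* R') (x : R) :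
    Matrix.SpecialLinearGroup.map f (lowerSL x) = lowerSL (f x) := by
  ext i j
  fin_cases i <;> fin_cases j <;> simp

lemma upperSL_add (x y : R) : upperSL (x + y) = upperSL x * upperSL y :=
  coe_SL_injective (by simp [add_comm])

lemma lowerSL_add (x y : R) : lowerSL (x + y) = lowerSL x * lowerSL y :=
  coe_SL_injective (by simp)

lemma upperSL_zpow (x : R) (n : ℤ) : upperSL x ^ n = upperSL (n * x) := by
  let f : Multiplicative R →* SL(2, R) :=
    MonoidHom.mk' (fun a => upperSL a.toAdd) fun a b => upperSL_add a.toAdd b.toAdd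
  simpa [f] using (map_zpow f (Multiplicative.ofAdd x) n).symm

lemma lowerSL_zpow (x : R) (n : ℤ) : lowerSL x ^ n = lowerSL (n * x) := by
  let f : Multiplicative R →* SL(2, R) :=
    MonoidHom.mk' (fun a => lowerSL a.toAdd) fun a b => lowerSL_add a.toAdd b.toAdd
  simpa [f] using (map_zpow f (Multiplicative.ofAdd x) n).symm

end ElementaryMatrices

/-- Images of the elementary matrices of `SL₂(R)` in a group `G`, subject to the relations of a
rank one Steinberg group: additivity, the action of the Weyl elements `u(v) l(-v⁻¹) u(v)` on the
root subgroups, and commutation across the factors cut out by an idempotent. -/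
structure SteinbergData (R G : Type*) [CommRing R] [Group G] where
  upper : R → G
  lower : R → G
  upper_add : ∀ x y, upper (x + y) = upper x * upper y
  lower_add : ∀ x y, lower (x + y) = lower x * lower y
  weyl_semiconj : ∀ (v : Rˣ) (x : R),
    SemiconjBy (upper v * lower (-↑v⁻¹) * upper v) (upper x) (lower (-(↑v⁻¹ * ↑v⁻¹ * x)))
  commute_upper_lower : ∀ e x y, IsIdempotentElem e →
    Commute (upper (e * x)) (lower ((1 - e) * y))

namespace SteinbergData

section Relations

variable {R G : Type*} [CommRing R] [Group G] (D : SteinbergData R G)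

/-- The Weyl element `w(v)`, the image of `[[0, v], [-v⁻¹, 0]]`. -/
def weyl (v : Rˣ) : G := D.upper v * D.lower (-↑v⁻¹) * D.upper v

/-- The torus element `h(v)`, the image of `[[v, 0], [0, v⁻¹]]`. -/
def torus (v : Rˣ) : G := D.weyl v * D.weyl (-1)

lemma upper_zero : D.upper 0 = 1 := by simpa using D.upper_add 0 0

lemma lower_zero : D.lower 0 = 1 := by simpa using D.lower_add 0 0

lemma upper_neg (x : R) : D.upper (-x) = (D.upper x)⁻¹ :=
  eq_inv_of_mul_eq_one_left (by rw [← D.upper_add, neg_add_cancel, upper_zero])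

lemma lower_neg (x : R) : D.lower (-x) = (D.lower x)⁻¹ :=
  eq_inv_of_mul_eq_one_left (by rw [← D.lower_add, neg_add_cancel, lower_zero])

lemma commute_upper (x y : R) : Commute (D.upper x) (D.upper y) := by
  rw [Commute, SemiconjBy, ← D.upper_add, ← D.upper_add, add_comm]

lemma commute_lower (x y : R) : Commute (D.lower x) (D.lower y) := by
  rw [Commute, SemiconjBy, ← D.lower_add, ← D.lower_add, add_comm]

lemma weyl_neg (v : Rˣ) : D.weyl (-v) = (D.weyl v)⁻¹ := by
  simp [weyl, lower_neg, upper_neg, mul_assoc]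

lemma weyl_mul_upper (v : Rˣ) (x : R) :
    D.weyl v * D.upper x = D.lower (-(↑v⁻¹ * ↑v⁻¹ * x)) * D.weyl v :=
  D.weyl_semiconj v x

lemma upper_mul_weyl (v : Rˣ) (x : R) :
    D.upper x * D.weyl v = D.weyl v * D.lower (-(↑v⁻¹ * ↑v⁻¹ * x)) := by
  have h := D.weyl_mul_upper (-v) x
  rw [weyl_neg, inv_mul_eq_iff_eq_mul, ← mul_assoc, eq_mul_inv_iff_mul_eq] at h
  simpa using h

lemma weyl_mul_lower (v : Rˣ) (x : R) :
    D.weyl v * D.lower x = D.upper (-(↑v * ↑v * x)) * D.weyl v := by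
  rw [upper_mul_weyl]
  congr 2
  linear_combination (-x * ↑v⁻¹ * v - x) * v.inv_mul

lemma lower_mul_weyl (v : Rˣ) (x : R) :
    D.lower x * D.weyl v = D.weyl v * D.upper (-(↑v * ↑v * x)) := by
  rw [weyl_mul_upper]
  congr 2
  linear_combination (-x * ↑v⁻¹ * v - x) * v.inv_mul

lemma weyl_eq_lower_mul_upper_mul_lower (v : Rˣ) :
    D.weyl v = D.lower (-↑v⁻¹) * D.upper v * D.lower (-↑v⁻¹) := by
  have h := D.weyl_mul_upper v v
  rw [mul_assoc (_ : R), v.inv_mul, mul_one] at h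
  nth_rw 2 [weyl] at h
  rw [← mul_assoc, ← mul_assoc] at h
  exact mul_right_cancel h

lemma upper_eq_lower_mul_weyl_mul_lower (v : Rˣ) :
    D.upper v = D.lower ↑v⁻¹ * D.weyl v * D.lower ↑v⁻¹ := by
  rw [weyl_eq_lower_mul_upper_mul_lower, lower_neg]
  group

lemma lower_eq_upper_mul_weyl_mul_upper (v : Rˣ) :
    D.lower v = D.upper ↑v⁻¹ * D.weyl (-v⁻¹) * D.upper ↑v⁻¹ := by
  simp only [weyl, Units.val_neg, upper_neg, inv_neg, inv_inv, neg_neg]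
  group

lemma torus_one : D.torus 1 = 1 := by simp [torus, weyl_neg]

lemma weyl_eq_torus_mul (v : Rˣ) : D.weyl v = D.torus v * D.weyl 1 := by
  simp [torus, weyl_neg]

lemma weyl_mul_weyl (a b : Rˣ) : D.weyl a * D.weyl b = D.torus a * (D.torus (-b))⁻¹ := by
  simp [torus, weyl_neg]

lemma torus_semiconj_upper (v : Rˣ) (x : R) :
    SemiconjBy (D.torus v) (D.upper x) (D.upper (v * v * x)) := by
  rw [SemiconjBy, torus, mul_assoc, weyl_mul_upper, ← mul_assoc, weyl_mul_lower, mul_assoc]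
  simp

lemma torus_semiconj_lower (v : Rˣ) (x : R) :
    SemiconjBy (D.torus v) (D.lower x) (D.lower (↑v⁻¹ * ↑v⁻¹ * x)) := by
  rw [SemiconjBy, torus, mul_assoc, weyl_mul_lower, ← mul_assoc, weyl_mul_upper, mul_assoc]
  simp

lemma torus_semiconj_weyl (a b : Rˣ) :
    SemiconjBy (D.torus a) (D.weyl b) (D.weyl (a * a * b)) := by
  have h := ((D.torus_semiconj_upper a b).mul_right (D.torus_semiconj_lower a (-↑b⁻¹))).mul_right
    (D.torus_semiconj_upper a b)
  have e : D.weyl (a * a * b) =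
      D.upper (a * a * b) * D.lower (↑a⁻¹ * ↑a⁻¹ * -↑b⁻¹) * D.upper (a * a * b) := by
    simp [weyl, mul_comm, mul_left_comm, mul_assoc]
  rw [e]
  exact h

lemma torus_conj_torus (a b : Rˣ) :
    D.torus a * D.torus b * (D.torus a)⁻¹ = D.torus (a * a * b) * (D.torus (a * a))⁻¹ := by
  have h : SemiconjBy (D.torus a) (D.torus b) (D.weyl (a * a * b) * D.weyl (a * a * -1)) :=
    (D.torus_semiconj_weyl a b).mul_right (D.torus_semiconj_weyl a (-1))
  rw [mul_inv_eq_iff_eq_mul, h.eq, weyl_mul_weyl]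
  simp

lemma commute_torus {z : G} (hu : ∀ x, Commute z (D.upper x)) (hl : ∀ x, Commute z (D.lower x))
    (v : Rˣ) : Commute z (D.torus v) :=
  have hw (v : Rˣ) : Commute z (D.weyl v) := ((hu _).mul_right (hl _)).mul_right (hu _)
  (hw v).mul_right (hw (-1))

/-- The failure of `v ↦ h(v)` to be multiplicative at `(a, b)`; it commutes with the image of every
elementary matrix. -/
def torusDefect (a b : Rˣ) : G := (D.torus (a * b))⁻¹ * (D.torus a * D.torus b)

lemma commute_torusDefect_torus (a b v : Rˣ) : Commute (D.torusDefect a b) (D.torus v) := by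
  refine D.commute_torus (fun x => ?_) (fun x => ?_) v
  · have h := (D.torus_semiconj_upper a (b * b * x)).mul_left (D.torus_semiconj_upper b x)
    have e : (a * a * (b * b * x) : R) = ↑(a * b) * ↑(a * b) * x := by push_cast; ring
    rw [e] at h
    exact (D.torus_semiconj_upper (a * b) x).inv_symm_left.mul_left h
  · have h := (D.torus_semiconj_lower a (↑b⁻¹ * ↑b⁻¹ * x)).mul_left (D.torus_semiconj_lower b x)
    have e : (↑a⁻¹ * ↑a⁻¹ * (↑b⁻¹ * ↑b⁻¹ * x) : R) = ↑(a * b)⁻¹ * ↑(a * b)⁻¹ * x := by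
      rw [mul_inv]; push_cast; ring
    rw [e] at h
    exact (D.torus_semiconj_lower (a * b) x).inv_symm_left.mul_left h

lemma commute_torus_mul {v a b : Rˣ} (ha : Commute (D.torus v) (D.torus a))
    (hb : Commute (D.torus v) (D.torus b)) : Commute (D.torus v) (D.torus (a * b)) := by
  have e : D.torus (a * b) = D.torus a * D.torus b * (D.torusDefect a b)⁻¹ := by
    rw [torusDefect]
    group
  rw [e]
  exact (ha.mul_right hb).mul_right (D.commute_torusDefect_torus a b v).symm.inv_right

lemma torus_mul_of_isSquare (hc : ∀ a b, Commute (D.torus a) (D.torus b)) {s : Rˣ}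
    (hs : IsSquare s) (b : Rˣ) : D.torus (s * b) = D.torus s * D.torus b := by
  obtain ⟨a, rfl⟩ := hs
  have h := D.torus_conj_torus a b
  rw [(hc a b).eq, mul_inv_cancel_right, eq_mul_inv_iff_mul_eq] at h
  rw [← h, (hc _ _).eq]

-- Expand `l(-x⁻¹) l(-y⁻¹) = l(-(xy)⁻¹)` by `l(-v⁻¹) = u(-v) w(v) u(-v)`: in the middle of the left
-- side appears `u(-x-y) = u(-1) = l(-1) w(-1) l(-1)`, and moving its outer factors through the Weyl
-- elements leaves the claimed identity.
lemma weyl_mul_weyl_mul_weyl_of_add_eq_one {x y : Rˣ} (hxy : (x + y : R) = 1) :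
    D.weyl x * D.weyl (-1) * D.weyl y = D.weyl (x * y) := by
  have hlower (v : Rˣ) : D.lower (-↑v⁻¹) = D.upper (-v) * D.weyl v * D.upper (-v) := by
    rw [weyl, upper_neg]
    group
  have hadd : D.lower (-↑x⁻¹) * D.lower (-↑y⁻¹) = D.lower (-↑(x * y)⁻¹) := by
    rw [← D.lower_add, mul_inv]
    congr 1
    push_cast
    linear_combination (-(↑x⁻¹ * ↑y⁻¹ : R)) * hxy + ↑y⁻¹ * x.mul_inv + ↑x⁻¹ * y.mul_inv
  have hone : D.upper (-x) * D.upper (-y) = D.lower (-1) * D.weyl (-1) * D.lower (-1) := by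
    rw [← D.upper_add, ← neg_add, hxy]
    simpa using D.upper_eq_lower_mul_weyl_mul_lower (-1)
  have hleft : D.upper (-x) * (D.weyl x * D.lower (-1)) = D.upper (-↑(x * y)) * D.weyl x := by
    rw [weyl_mul_lower, ← mul_assoc, ← D.upper_add]
    congr 2
    push_cast
    linear_combination (x : R) * hxy
  have hright : (D.lower (-1) * D.weyl y) * D.upper (-y) = D.weyl y * D.upper (-↑(x * y)) := by
    rw [lower_mul_weyl, mul_assoc, ← D.upper_add]
    congr 2
    push_cast
    linear_combination (y : R) * hxy
  have key : D.upper (-↑(x * y)) * (D.weyl x * D.weyl (-1) * D.weyl y) * D.upper (-↑(x * y)) =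
      D.upper (-↑(x * y)) * D.weyl (x * y) * D.upper (-↑(x * y)) := calc
    _ = (D.upper (-↑(x * y)) * D.weyl x) * D.weyl (-1) * (D.weyl y * D.upper (-↑(x * y))) := by
        group
    _ = D.upper (-x) * D.weyl x * (D.lower (-1) * D.weyl (-1) * D.lower (-1)) *
          (D.weyl y * D.upper (-y)) := by rw [← hleft, ← hright]; group
    _ = (D.upper (-x) * D.weyl x * D.upper (-x)) * (D.upper (-y) * D.weyl y * D.upper (-y)) := by
        rw [← hone]; group
    _ = _ := by rw [← hlower, ← hlower, hadd, hlower]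
  exact mul_left_cancel (mul_right_cancel key)

lemma torus_mul_of_add_eq_one {x y : Rˣ} (hxy : (x + y : R) = 1) :
    D.torus (x * y) = D.torus x * D.torus y := by
  simp only [torus, ← D.weyl_mul_weyl_mul_weyl_of_add_eq_one hxy, mul_assoc]

lemma weyl_one_mul_weyl (v : Rˣ) : D.weyl 1 * D.weyl v = D.weyl v⁻¹ * D.weyl 1 := by
  have h : SemiconjBy (D.weyl 1) (D.weyl v)
      (D.lower (-v) * D.upper ↑v⁻¹ * D.lower (-v)) := by
    have hu : SemiconjBy (D.weyl 1) (D.upper v) (D.lower (-v)) := by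
      simpa [SemiconjBy] using D.weyl_mul_upper 1 v
    have hl : SemiconjBy (D.weyl 1) (D.lower (-↑v⁻¹)) (D.upper ↑v⁻¹) := by
      simpa [SemiconjBy] using D.weyl_mul_lower 1 (-↑v⁻¹)
    exact (hu.mul_right hl).mul_right hu
  rw [h.eq, weyl_eq_lower_mul_upper_mul_lower D v⁻¹, inv_inv]

lemma torus_neg_inv (v : Rˣ) : D.torus (-v⁻¹) = D.torus (-1) * (D.torus v)⁻¹ := by
  have h := congrArg (·⁻¹) (D.weyl_one_mul_weyl v⁻¹)
  simp only [mul_inv_rev, ← weyl_neg, inv_inv] at h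
  rw [torus, h]
  simp [torus, weyl_neg]

end Relations

section Generation

variable {R G K : Type*} [CommRing R] [Group G] [Group K]

/-- The subgroup generated by the images of the elementary matrices. -/
def generated (D : SteinbergData R G) : Subgroup G :=
  Subgroup.closure (Set.range D.upper ∪ Set.range D.lower)

lemma upper_mem_generated (D : SteinbergData R G) (x : R) : D.upper x ∈ D.generated :=
  Subgroup.subset_closure (Or.inl ⟨x, rfl⟩)

lemma lower_mem_generated (D : SteinbergData R G) (x : R) : D.lower x ∈ D.generated :=
  Subgroup.subset_closure (Or.inr ⟨x, rfl⟩)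

lemma generated_le {D : SteinbergData R G} {H : Subgroup G} (hu : ∀ x, D.upper x ∈ H)
    (hl : ∀ x, D.lower x ∈ H) : D.generated ≤ H :=
  (Subgroup.closure_le H).2 <|
    Set.union_subset (Set.range_subset_iff.2 hu) (Set.range_subset_iff.2 hl)

lemma weyl_mem_generated (D : SteinbergData R G) (v : Rˣ) : D.weyl v ∈ D.generated :=
  mul_mem (mul_mem (D.upper_mem_generated _) (D.lower_mem_generated _)) (D.upper_mem_generated _)

lemma torus_mem_generated (D : SteinbergData R G) (v : Rˣ) : D.torus v ∈ D.generated :=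
  mul_mem (D.weyl_mem_generated v) (D.weyl_mem_generated (-1))

lemma map_generated {D : SteinbergData R G} {D' : SteinbergData R K} (f : G →* K)
    (hu : ∀ x, f (D.upper x) = D'.upper x) (hl : ∀ x, f (D.lower x) = D'.lower x) :
    D.generated.map f = D'.generated := by
  rw [generated, MonoidHom.map_closure, Set.image_union, ← Set.range_comp, ← Set.range_comp,
    generated]
  congr 3 <;> funext x
  exacts [hu x, hl x]

lemma coe_upperSL_mul_lowerSL_mul_upperSL (v : Rˣ) :
    ((upperSL (v : R) * lowerSL (-↑v⁻¹ : R) * upperSL (v : R) : SL(2, R)) :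
      Matrix (Fin 2) (Fin 2) R) = !![0, (v : R); -↑v⁻¹, 0] := by
  simp

/-- The elementary matrices themselves. -/
def standard (R : Type*) [CommRing R] : SteinbergData R SL(2, R) where
  upper := upperSL
  lower := lowerSL
  upper_add := upperSL_add
  lower_add := lowerSL_add
  weyl_semiconj v x := coe_SL_injective <| by
    simp only [Matrix.SpecialLinearGroup.coe_mul _ (upperSL x),
      Matrix.SpecialLinearGroup.coe_mul (lowerSL _), coe_upperSL_mul_lowerSL_mul_upperSL]
    simp [mul_right_comm _ x, mul_assoc]
  commute_upper_lower e x y he := coe_SL_injective <| by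
    have h : e * x * ((1 - e) * y) = 0 := by linear_combination (-x * y) * he.eq
    simp [h, mul_comm _ (e * x)]

lemma coe_standard_torus (v : Rˣ) :
    ((standard R).torus v : Matrix (Fin 2) (Fin 2) R) = !![↑v, 0; 0, ↑v⁻¹] := by
  rw [torus, weyl, weyl, Matrix.SpecialLinearGroup.coe_mul]
  simp only [standard, coe_upperSL_mul_lowerSL_mul_upperSL]
  simp

/-- Two families of images of elementary matrices, side by side in the product group. -/
def prod (D : SteinbergData R G) (D' : SteinbergData R K) : SteinbergData R (G × K) where
  upper x := (D.upper x, D'.upper x)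
  lower x := (D.lower x, D'.lower x)
  upper_add x y := Prod.ext (D.upper_add x y) (D'.upper_add x y)
  lower_add x y := Prod.ext (D.lower_add x y) (D'.lower_add x y)
  weyl_semiconj v x := Prod.ext (D.weyl_semiconj v x) (D'.weyl_semiconj v x)
  commute_upper_lower e x y he :=
    Prod.ext (D.commute_upper_lower e x y he) (D'.commute_upper_lower e x y he)

/-- The assignment of the elementary matrices extends to a homomorphism from `SL₂(R)`; asking for
its range to be generated by their images spares a separate discussion of whether the elementary
matrices generate `SL₂(R)`. -/
def Factors (D : SteinbergData R G) : Prop :=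
  ∃ φ : SL(2, R) →* G, φ.range ≤ D.generated ∧
    (∀ x, φ (upperSL x) = D.upper x) ∧ ∀ x, φ (lowerSL x) = D.lower x

lemma coe_cell (a : R) (d : Rˣ) (c : R) :
    ((upperSL a * (standard R).torus d * lowerSL c : SL(2, R)) : Matrix (Fin 2) (Fin 2) R) =
      !![↑d + a * ↑d⁻¹ * c, a * ↑d⁻¹; ↑d⁻¹ * c, ↑d⁻¹] := by
  simp [coe_standard_torus]

lemma standard_torus_mul (a b : Rˣ) :
    (standard R).torus (a * b) = (standard R).torus a * (standard R).torus b :=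
  coe_SL_injective (by simp [coe_standard_torus, mul_comm])

lemma Factors.torus_mul {D : SteinbergData R G} (h : D.Factors) (a b : Rˣ) :
    D.torus (a * b) = D.torus a * D.torus b := by
  obtain ⟨φ, -, hu, hl⟩ := h
  have hφ (v : Rˣ) : φ ((standard R).torus v) = D.torus v := by
    simp [torus, weyl, standard, hu, hl]
  rw [← hφ, ← hφ, ← hφ, ← map_mul, standard_torus_mul]

end Generation

section LocalRing

variable {R G : Type*} [CommRing R] [Group G] {D : SteinbergData R G}

/-- Membership in the union of the cells `U H L` and `U H L w(1)`. -/
def IsBruhat (D : SteinbergData R G) (z : G) : Prop :=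
  ∃ a d c, z = D.upper a * D.torus d * D.lower c ∨
    z = D.upper a * D.torus d * D.lower c * D.weyl 1

variable (hD : ∀ a b, D.torus (a * b) = D.torus a * D.torus b)
include hD

lemma weyl_one_mul_weyl_one : D.weyl 1 * D.weyl 1 = D.torus (-1) := by
  rw [weyl_mul_weyl, torus_one, one_mul, inv_eq_iff_mul_eq_one, ← hD]
  simp [torus_one]

lemma lower_mul_upper_of_add_eq_one_add_mul {y : R} {x W : Rˣ} (hW : (W : R) = 1 + x * y) :
    D.lower y * D.upper x = D.upper (x * ↑W⁻¹) * D.torus W⁻¹ * D.lower (y * ↑W⁻¹) := by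
  have hxW : ((W * x⁻¹ : Rˣ) : R) = y + ↑x⁻¹ := by
    push_cast
    linear_combination ↑x⁻¹ * hW + y * x.mul_inv
  have htorus : D.weyl (-(W * x⁻¹)⁻¹) * D.weyl x = D.torus W⁻¹ := by
    rw [weyl_mul_weyl, mul_inv_eq_iff_eq_mul, ← hD]
    congr 1
    simp [mul_comm]
  have hupper : (x * ↑W⁻¹ : R) = ↑(W * x⁻¹)⁻¹ := by simp
  have hlower : (y * ↑W⁻¹ : R) = -(↑x⁻¹ * ↑x⁻¹ * ↑(W * x⁻¹)⁻¹) + ↑x⁻¹ := by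
    rw [← hupper]
    linear_combination (↑x⁻¹ : R) * W.mul_inv - ↑x⁻¹ * ↑W⁻¹ * hW +
      (-↑W⁻¹ * y + ↑x⁻¹ * ↑W⁻¹) * x.mul_inv
  calc
    _ = D.lower (W * x⁻¹ : Rˣ) * D.weyl x * D.lower ↑x⁻¹ := by
      rw [upper_eq_lower_mul_weyl_mul_lower, ← mul_assoc, ← mul_assoc, ← D.lower_add, hxW]
    _ = D.upper ↑(W * x⁻¹)⁻¹ * D.weyl (-(W * x⁻¹)⁻¹) * (D.upper ↑(W * x⁻¹)⁻¹ * D.weyl x) *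
        D.lower ↑x⁻¹ := by
      rw [lower_eq_upper_mul_weyl_mul_upper]
      simp only [mul_assoc]
    _ = D.upper ↑(W * x⁻¹)⁻¹ * (D.weyl (-(W * x⁻¹)⁻¹) * D.weyl x) *
        (D.lower (-(↑x⁻¹ * ↑x⁻¹ * ↑(W * x⁻¹)⁻¹)) * D.lower ↑x⁻¹) := by
      rw [D.upper_mul_weyl x]
      simp only [mul_assoc]
    _ = _ := by rw [htorus, ← D.lower_add, hupper, hlower]

lemma IsBruhat.upper_mul_torus_mul {z : G} (hz : D.IsBruhat z) (a : R) (d : Rˣ) :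
    D.IsBruhat (D.upper a * D.torus d * z) := by
  obtain ⟨a', d', c, h⟩ := hz
  have key : D.upper a * D.torus d * (D.upper a' * D.torus d' * D.lower c) =
      D.upper (a + d * d * a') * D.torus (d * d') * D.lower c := by
    rw [D.upper_add, hD, mul_assoc _ (D.upper (d * d * a')), ← mul_assoc (D.upper (d * d * a')),
      ← (D.torus_semiconj_upper d a').eq]
    simp only [mul_assoc]
  refine ⟨a + d * d * a', d * d', c, h.imp ?_ ?_⟩ <;> rintro rfl
  · exact key
  · rw [← key, ← mul_assoc]

lemma IsBruhat.mul_weyl_one {z : G} (hz : D.IsBruhat z) : D.IsBruhat (z * D.weyl 1) := by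
  obtain ⟨a, d, c, rfl | rfl⟩ := hz
  · exact ⟨a, d, c, Or.inr rfl⟩
  · refine ⟨a, d * -1, c, Or.inl ?_⟩
    have h : Commute (D.torus (-1)) (D.lower c) := by
      simpa [Commute] using D.torus_semiconj_lower (-1) c
    rw [mul_assoc, weyl_one_mul_weyl_one hD, mul_assoc, ← h.eq, hD, mul_assoc, mul_assoc,
      mul_assoc]

omit hD in
lemma isBruhat_lower_mul_upper_of_isUnit (y : Rˣ) (x : R) :
    D.IsBruhat (D.lower y * D.upper x) := by
  refine ⟨↑y⁻¹, -y⁻¹, -(↑y⁻¹ + x), Or.inr ?_⟩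
  rw [lower_eq_upper_mul_weyl_mul_upper, weyl_eq_torus_mul, mul_assoc, ← D.upper_add, mul_assoc,
    mul_assoc, weyl_mul_upper]
  simp [mul_assoc]

variable [IsLocalRing R]

lemma isBruhat_lower_mul_upper (y x : R) : D.IsBruhat (D.lower y * D.upper x) := by
  by_cases hy : IsUnit y
  · obtain ⟨y, rfl⟩ := hy
    exact isBruhat_lower_mul_upper_of_isUnit y x
  have cell {y : R} (hy : ¬IsUnit y) (x : Rˣ) : ∃ W : Rˣ, D.lower y * D.upper x =
      D.upper (x * ↑W⁻¹) * D.torus W⁻¹ * D.lower (y * ↑W⁻¹) := by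
    have hW : IsUnit (1 + x * y) := by
      have h := IsLocalRing.isUnit_one_sub_self_of_mem_nonunits (-(x * y)) (by simpa using hy)
      simpa using h
    exact ⟨hW.unit, lower_mul_upper_of_add_eq_one_add_mul hD hW.unit_spec⟩
  by_cases hx : IsUnit x
  · obtain ⟨W, hW⟩ := cell hy hx.unit
    exact ⟨_, _, _, Or.inl hW⟩
  · obtain ⟨W, hW⟩ := cell hy 1
    have hx1 : IsUnit (x - 1) := by
      simpa using (IsLocalRing.isUnit_one_sub_self_of_mem_nonunits x hx).neg
    obtain ⟨W', hW'⟩ := cell (y := y * ↑W⁻¹) (by simpa using hy) hx1.unit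
    have e : D.lower y * D.upper x = D.upper (1 * ↑W⁻¹) * D.torus W⁻¹ *
        (D.lower (y * ↑W⁻¹) * D.upper hx1.unit) := by
      rw [Units.val_one] at hW
      rw [← mul_assoc, ← hW, mul_assoc, ← D.upper_add]
      simp
    rw [e]
    exact IsBruhat.upper_mul_torus_mul hD ⟨_, _, _, Or.inl hW'⟩ _ _

lemma IsBruhat.mul_upper {z : G} (hz : D.IsBruhat z) (x : R) : D.IsBruhat (z * D.upper x) := by
  obtain ⟨a, d, c, rfl | rfl⟩ := hz
  · rw [mul_assoc]
    exact (isBruhat_lower_mul_upper hD c x).upper_mul_torus_mul hD a d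
  · refine ⟨a, d, c + -x, Or.inr ?_⟩
    rw [mul_assoc, weyl_mul_upper, D.lower_add]
    simp [mul_assoc]

lemma IsBruhat.mul_lower {z : G} (hz : D.IsBruhat z) (y : R) : D.IsBruhat (z * D.lower y) := by
  obtain ⟨a, d, c, rfl | rfl⟩ := hz
  · exact ⟨a, d, c + y, Or.inl (by rw [D.lower_add, mul_assoc _ _ (D.lower y)])⟩
  · have h := ((isBruhat_lower_mul_upper hD c (-y)).upper_mul_torus_mul hD a d).mul_weyl_one hD
    rw [mul_assoc, weyl_mul_lower]
    simpa [mul_assoc] using h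

lemma isBruhat_of_mem_generated {z : G} (hz : z ∈ D.generated) : D.IsBruhat z := by
  induction hz using Subgroup.closure_induction_right with
  | one => exact ⟨0, 1, 0, Or.inl (by simp [upper_zero, lower_zero, torus_one])⟩
  | mul_right z _ y hy hz =>
    rcases hy with ⟨x, rfl⟩ | ⟨x, rfl⟩
    exacts [hz.mul_upper hD x, hz.mul_lower hD x]
  | mul_inv_cancel z _ y hy hz =>
    rcases hy with ⟨x, rfl⟩ | ⟨x, rfl⟩
    · exact D.upper_neg x ▸ hz.mul_upper hD (-x)
    · exact D.lower_neg x ▸ hz.mul_lower hD (-x)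

omit hD in
lemma generated_standard_eq_top : (standard R).generated = ⊤ := by
  have unit_case (A : SL(2, R)) (hA : IsUnit (A 1 1)) : A ∈ (standard R).generated := by
    obtain ⟨d, hd⟩ := hA
    have hdet : A 0 0 * d - A 0 1 * A 1 0 = 1 := by rw [hd, ← Matrix.det_fin_two]; exact A.2
    have e : A = upperSL (A 0 1 * ↑d⁻¹) * (standard R).torus d⁻¹ * lowerSL (↑d⁻¹ * A 1 0) := by
      ext i j
      rw [coe_cell]
      fin_cases i <;> fin_cases j <;> simp [← hd, mul_assoc]
      linear_combination (↑d⁻¹ : R) * hdet - A 0 0 * d.mul_inv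
    rw [e]
    exact mul_mem
      (mul_mem ((standard R).upper_mem_generated _) ((standard R).torus_mem_generated _))
      ((standard R).lower_mem_generated _)
  refine (Subgroup.eq_top_iff' _).2 fun A => ?_
  by_cases hA : IsUnit (A 1 1)
  · exact unit_case A hA
  have hdet : A 0 0 * A 1 1 + -(A 0 1 * A 1 0) = 1 := by
    rw [← sub_eq_add_neg, ← Matrix.det_fin_two]
    exact A.2
  have hA' : IsUnit (A 1 0 + A 1 1) := by
    have hAu : IsUnit (A 0 1 * A 1 0) := by
      rcases IsLocalRing.isUnit_or_isUnit_of_add_one hdet with h | h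
      · exact absurd (isUnit_of_mul_isUnit_right h) hA
      · exact IsUnit.neg_iff _ |>.1 h
    have h10 : IsUnit (A 1 0 + A 1 1 + -A 1 1) := by
      simpa using isUnit_of_mul_isUnit_right hAu
    exact (IsLocalRing.isUnit_or_isUnit_of_isUnit_add h10).resolve_right (by simpa using hA)
  have h := unit_case (A * upperSL 1) (by simpa [Matrix.mul_apply] using hA')
  exact (Subgroup.mul_mem_cancel_right _ ((standard R).upper_mem_generated 1)).1 h

lemma eq_one_of_mem_generated_standard_prod {z : SL(2, R) × G}
    (hz : z ∈ ((standard R).prod D).generated) (hz1 : z.1 = 1) : z = 1 := by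
  have hE (a b : Rˣ) : ((standard R).prod D).torus (a * b) =
      ((standard R).prod D).torus a * ((standard R).prod D).torus b :=
    Prod.ext (standard_torus_mul a b) (hD a b)
  obtain ⟨a, d, c, rfl | rfl⟩ := isBruhat_of_mem_generated hE hz
  · have h : !![↑d + a * ↑d⁻¹ * c, a * ↑d⁻¹; ↑d⁻¹ * c, (↑d⁻¹ : R)] = 1 := by
      rw [← coe_cell]
      exact congrArg Subtype.val hz1
    obtain rfl : d = 1 := by
      rw [← inv_eq_one, ← Units.val_eq_one]
      simpa using congrFun₂ h 1 1
    obtain rfl : a = 0 := by simpa using congrFun₂ h 0 1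
    obtain rfl : c = 0 := by simpa using congrFun₂ h 1 0
    simp [upper_zero, lower_zero, torus_one]
  · have h : !![↑d + a * ↑d⁻¹ * c, a * ↑d⁻¹; ↑d⁻¹ * c, (↑d⁻¹ : R)] *
        !![0, ((1 : Rˣ) : R); -↑(1 : Rˣ)⁻¹, 0] = 1 := by
      rw [← coe_cell, ← coe_upperSL_mul_lowerSL_mul_upperSL]
      exact congrArg Subtype.val hz1
    have h10 := congrFun₂ h 1 0
    simp at h10

theorem factors_of_torus_mul : D.Factors := by
  set E := (standard R).prod D
  have hfst : E.generated.map (MonoidHom.fst SL(2, R) G) = ⊤ := by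
    rw [map_generated (D' := standard R) _ (fun _ => rfl) (fun _ => rfl), generated_standard_eq_top]
  have hsnd : E.generated.map (MonoidHom.snd SL(2, R) G) = D.generated :=
    map_generated _ (fun _ => rfl) (fun _ => rfl)
  have hinj : Function.Injective ((MonoidHom.fst SL(2, R) G).comp E.generated.subtype) :=
    (injective_iff_map_eq_one _).2 fun z hz =>
      Subtype.ext (eq_one_of_mem_generated_standard_prod hD z.2 hz)
  have hsurj : Function.Surjective ((MonoidHom.fst SL(2, R) G).comp E.generated.subtype) := by
    intro x
    obtain ⟨z, hz, rfl⟩ : x ∈ E.generated.map (MonoidHom.fst SL(2, R) G) :=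
      hfst ▸ Subgroup.mem_top x
    exact ⟨⟨z, hz⟩, rfl⟩
  obtain ⟨φ, hφ⟩ := Subgroup.exists_eq_graph ⟨hinj, hsurj⟩
  have hmem {x y} (h : (x, y) ∈ E.generated) : φ x = y := by rwa [hφ] at h
  refine ⟨φ, ?_, fun x => hmem (E.upper_mem_generated x), fun x => hmem (E.lower_mem_generated x)⟩
  rintro _ ⟨x, rfl⟩
  rw [← hsnd]
  exact ⟨(x, φ x), by rw [hφ]; rfl, rfl⟩

end LocalRing

section Products

variable {R R₁ R₂ G : Type*} [CommRing R] [CommRing R₁] [CommRing R₂] [Group G]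

/-- Restriction of scalars along a ring homomorphism. -/
def comap (D : SteinbergData R G) (f : R₁ →+* R) : SteinbergData R₁ G where
  upper x := D.upper (f x)
  lower x := D.lower (f x)
  upper_add x y := by rw [map_add, D.upper_add]
  lower_add x y := by rw [map_add, D.lower_add]
  weyl_semiconj v x := by
    simpa [map_neg, ← map_inv] using D.weyl_semiconj (Units.map f v) (f x)
  commute_upper_lower e x y he := by
    simpa using D.commute_upper_lower (f e) (f x) (f y) (he.map f)

lemma Factors.of_comap {D : SteinbergData R G} (f : R₁ ≃+* R)
    (h : (D.comap (f : R₁ →+* R)).Factors) : D.Factors := by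
  obtain ⟨φ, hφ, hu, hl⟩ := h
  refine ⟨φ.comp (Matrix.SpecialLinearGroup.map (f.symm : R →+* R₁)), ?_, ?_, ?_⟩
  · rintro _ ⟨x, rfl⟩
    exact generated_le (D := D.comap (f : R₁ →+* R)) (fun _ => D.upper_mem_generated _)
      (fun _ => D.lower_mem_generated _) (hφ ⟨_, rfl⟩)
  · intro x
    simp [map_upperSL, hu, comap]
  · intro x
    simp [map_lowerSL, hl, comap]

variable (D : SteinbergData (R₁ × R₂) G)

lemma commute_upper_fst_lower_snd (x : R₁) (y : R₂) :
    Commute (D.upper (x, 0)) (D.lower (0, y)) := by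
  simpa [sub_mul] using D.commute_upper_lower (1, 0) (x, 0) (0, y) (by simp [IsIdempotentElem])

lemma commute_upper_snd_lower_fst (x : R₁) (y : R₂) :
    Commute (D.upper (0, y)) (D.lower (x, 0)) := by
  simpa [sub_mul] using D.commute_upper_lower (0, 1) (0, y) (x, 0) (by simp [IsIdempotentElem])

lemma upper_prod (x : R₁) (y : R₂) : D.upper (x, y) = D.upper (x, 0) * D.upper (0, y) := by
  simp [← D.upper_add]

lemma lower_prod (x : R₁) (y : R₂) : D.lower (x, y) = D.lower (x, 0) * D.lower (0, y) := by
  simp [← D.lower_add]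

lemma upper_mul_lower_mul_upper_prod (a a' : R₁) (b b' : R₂) :
    D.upper (a, b) * D.lower (a', b') * D.upper (a, b) =
      D.upper (a, 0) * D.lower (a', 0) * D.upper (a, 0) *
        (D.upper (0, b) * D.lower (0, b') * D.upper (0, b)) := by
  rw [upper_prod, lower_prod, (D.commute_upper_snd_lower_fst a' b).mul_mul_mul_comm]
  have h : Commute (D.upper (0, b) * D.lower (0, b')) (D.upper (a, 0)) :=
    (D.commute_upper _ _).mul_left (D.commute_upper_fst_lower_snd a b').symm
  rw [h.mul_mul_mul_comm]

/-- The part of the data supported on the first factor of the ring. -/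
def fst : SteinbergData R₁ G where
  upper x := D.upper (x, 0)
  lower x := D.lower (x, 0)
  upper_add x y := by simp [← D.upper_add]
  lower_add x y := by simp [← D.lower_add]
  weyl_semiconj v x := by
    have h : SemiconjBy (D.upper (↑v, 1) * D.lower (-↑v⁻¹, -1) * D.upper (↑v, 1)) (D.upper (x, 0))
        (D.lower (-(↑v⁻¹ * ↑v⁻¹ * x), 0)) := by
      have hv : (MulEquiv.prodUnits.symm (v, (1 : R₂ˣ)) : R₁ × R₂) = (↑v, 1) := rfl
      have hv' : (↑(MulEquiv.prodUnits.symm (v, (1 : R₂ˣ)))⁻¹ : R₁ × R₂) = (↑v⁻¹, 1) := by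
        rw [← map_inv, Prod.inv_mk, inv_one]
        rfl
      have h := D.weyl_semiconj (MulEquiv.prodUnits.symm (v, 1)) (x, 0)
      rw [hv, hv'] at h
      simpa using h
    have hc : Commute (D.upper (0, 1) * D.lower (0, -1) * D.upper (0, 1)) (D.upper (x, 0)) :=
      ((D.commute_upper _ _).mul_left (D.commute_upper_fst_lower_snd _ _).symm).mul_left
        (D.commute_upper _ _)
    rw [upper_mul_lower_mul_upper_prod] at h
    have h' := h.mul_left hc.inv_left
    rwa [mul_inv_cancel_right] at h'
  commute_upper_lower e x y he := by
    simpa [sub_mul] using D.commute_upper_lower (e, 0) (x, 0) (y, 0)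
      (by simpa [IsIdempotentElem] using he)

/-- The part of the data supported on the second factor of the ring. -/
def snd : SteinbergData R₂ G :=
  (D.comap (RingEquiv.prodComm (R := R₂) (S := R₁) : R₂ × R₁ →+* R₁ × R₂)).fst

lemma fst_upper (x : R₁) : D.fst.upper x = D.upper (x, 0) := rfl

lemma fst_lower (x : R₁) : D.fst.lower x = D.lower (x, 0) := rfl

lemma snd_upper (x : R₂) : D.snd.upper x = D.upper (0, x) := rfl

lemma snd_lower (x : R₂) : D.snd.lower x = D.lower (0, x) := rfl

lemma commute_of_mem_generated {y z : G} (hy : y ∈ D.fst.generated) (hz : z ∈ D.snd.generated) :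
    Commute y z := by
  have hfst (w : G) (hu : ∀ y, Commute w (D.upper (0, y))) (hl : ∀ y, Commute w (D.lower (0, y))) :
      Commute w z :=
    (Subgroup.mem_centralizer_singleton_iff.1 (generated_le
      (fun y => Subgroup.mem_centralizer_singleton_iff.2 (hu y).eq.symm)
      (fun y => Subgroup.mem_centralizer_singleton_iff.2 (hl y).eq.symm) hz)).symm
  have hle : D.fst.generated ≤ Subgroup.centralizer {z} := generated_le
    (fun x => Subgroup.mem_centralizer_singleton_iff.2
      (hfst _ (fun _ => D.commute_upper _ _) (D.commute_upper_fst_lower_snd x)).eq)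
    (fun x => Subgroup.mem_centralizer_singleton_iff.2
      (hfst _ (fun y => (D.commute_upper_snd_lower_fst x y).symm)
        (fun _ => D.commute_lower _ _)).eq)
  exact Subgroup.mem_centralizer_singleton_iff.1 (hle hy)

lemma Factors.prod (h₁ : D.fst.Factors) (h₂ : D.snd.Factors) : D.Factors := by
  obtain ⟨φ₁, hφ₁, hu₁, hl₁⟩ := h₁
  obtain ⟨φ₂, hφ₂, hu₂, hl₂⟩ := h₂
  have hfst : D.fst.generated ≤ D.generated :=
    generated_le (fun _ => D.upper_mem_generated _) (fun _ => D.lower_mem_generated _)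
  have hsnd : D.snd.generated ≤ D.generated :=
    generated_le (fun _ => D.upper_mem_generated _) (fun _ => D.lower_mem_generated _)
  refine ⟨(φ₁.noncommCoprod φ₂ fun A B =>
      D.commute_of_mem_generated (hφ₁ ⟨A, rfl⟩) (hφ₂ ⟨B, rfl⟩)).comp
      ((Matrix.SpecialLinearGroup.map (RingHom.fst R₁ R₂)).prod
        (Matrix.SpecialLinearGroup.map (RingHom.snd R₁ R₂))), ?_, fun x => ?_, fun x => ?_⟩
  · rintro _ ⟨A, rfl⟩
    exact mul_mem (hfst (hφ₁ ⟨_, rfl⟩)) (hsnd (hφ₂ ⟨_, rfl⟩))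
  · simpa [map_upperSL, hu₁, hu₂, fst_upper, snd_upper] using (D.upper_prod x.1 x.2).symm
  · simpa [map_lowerSL, hl₁, hl₂, fst_lower, snd_lower] using (D.lower_prod x.1 x.2).symm

lemma weyl_prod (a : R₁ˣ) (b : R₂ˣ) :
    D.weyl (MulEquiv.prodUnits.symm (a, b)) = D.fst.weyl a * D.snd.weyl b := by
  have e : (↑(MulEquiv.prodUnits.symm (a, b))⁻¹ : R₁ × R₂) = (↑a⁻¹, ↑b⁻¹) := by
    rw [← map_inv]
    rfl
  rw [weyl, e]
  exact D.upper_mul_lower_mul_upper_prod _ _ _ _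

lemma torus_prod (a : R₁ˣ) (b : R₂ˣ) :
    D.torus (MulEquiv.prodUnits.symm (a, b)) = D.fst.torus a * D.snd.torus b := by
  have e : (-1 : (R₁ × R₂)ˣ) = MulEquiv.prodUnits.symm (-1, -1) := Units.ext rfl
  rw [torus, e, weyl_prod, weyl_prod, (D.commute_of_mem_generated (D.fst.weyl_mem_generated _)
    (D.snd.weyl_mem_generated _)).symm.mul_mul_mul_comm]
  rfl

lemma factors_of_subsingleton [Subsingleton R] (D : SteinbergData R G) : D.Factors := by
  have hu (x : R) : D.upper x = 1 := by rw [Subsingleton.elim x 0, upper_zero]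
  have hl (x : R) : D.lower x = 1 := by rw [Subsingleton.elim x 0, lower_zero]
  refine ⟨1, ?_, fun x => (hu x).symm, fun x => (hl x).symm⟩
  rintro _ ⟨A, rfl⟩
  exact one_mem _

end Products

section CyclicUnits

variable {R G : Type*} [CommRing R] [Group G]

lemma commute_torus_of_isCyclic [Finite Rˣ] [IsCyclic Rˣ] (D : SteinbergData R G) (a b : Rˣ) :
    Commute (D.torus a) (D.torus b) := by
  obtain ⟨r, hr⟩ := IsCyclic.exists_monoid_generator (α := Rˣ)
  have hpow {v : Rˣ} (h : Commute (D.torus v) (D.torus r)) (i : ℕ) :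
      Commute (D.torus v) (D.torus (r ^ i)) := by
    induction i with
    | zero => simp [torus_one]
    | succ i ih => rw [pow_succ]; exact D.commute_torus_mul ih h
  obtain ⟨i, rfl⟩ := Submonoid.mem_powers_iff _ _ |>.1 (hr a)
  obtain ⟨j, rfl⟩ := Submonoid.mem_powers_iff _ _ |>.1 (hr b)
  exact hpow (hpow (Commute.refl _) i).symm j

lemma isSquare_mul_of_isCyclic {H : Type*} [CommGroup H] [IsCyclic H] {a b : H}
    (ha : ¬IsSquare a) (hb : ¬IsSquare b) : IsSquare (a * b) := by
  obtain ⟨r, hr⟩ := IsCyclic.exists_generator (α := H)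
  obtain ⟨i, rfl⟩ := hr a
  obtain ⟨j, rfl⟩ := hr b
  have hodd {i : ℤ} (h : ¬IsSquare (r ^ i)) : Odd i :=
    Int.not_even_iff_odd.1 fun hi => h (hi.isSquare_zpow r)
  simpa [zpow_add] using ((hodd ha).add_odd (hodd hb)).isSquare_zpow r

-- Modulo squares there is one nontrivial symbol, `{u, u'}`, and it vanishes.
lemma torus_mul_of_isCyclic [Finite Rˣ] [IsCyclic Rˣ] (D : SteinbergData R G) {u u' : Rˣ}
    (hu : ¬IsSquare u) (hu' : ¬IsSquare u') (hadd : (u + u' : R) = 1) (x y : Rˣ) :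
    D.torus (x * y) = D.torus x * D.torus y := by
  have hc := D.commute_torus_of_isCyclic
  by_cases hx : IsSquare x
  · exact D.torus_mul_of_isSquare hc hx y
  by_cases hy : IsSquare y
  · rw [mul_comm, D.torus_mul_of_isSquare hc hy, (hc _ _).eq]
  have hs : IsSquare (x * u⁻¹) := isSquare_mul_of_isCyclic hx (by rwa [isSquare_inv])
  have hs' : IsSquare (y * u'⁻¹) := isSquare_mul_of_isCyclic hy (by rwa [isSquare_inv])
  have htorus {x u : Rˣ} (h : IsSquare (x * u⁻¹)) :
      D.torus x = D.torus (x * u⁻¹) * D.torus u := by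
    rw [← D.torus_mul_of_isSquare hc h, inv_mul_cancel_right]
  calc
    D.torus (x * y) = D.torus (x * u⁻¹ * (y * u'⁻¹ * (u * u'))) := by
      congr 1
      rw [mul_comm u, ← mul_assoc (y * _), inv_mul_cancel_right, mul_left_comm, mul_comm,
        inv_mul_cancel_right, mul_comm]
    _ = D.torus (x * u⁻¹) * (D.torus (y * u'⁻¹) * (D.torus u * D.torus u')) := by
      rw [D.torus_mul_of_isSquare hc hs, D.torus_mul_of_isSquare hc hs',
        D.torus_mul_of_add_eq_one hadd]
    _ = D.torus x * D.torus y := by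
      rw [(hc _ u).left_comm, htorus hs, htorus hs', mul_assoc]

-- Write a nonsquare as a sum of two squares and divide by it.
lemma exists_not_isSquare_add_eq_one {F : Type*} [Field F] [Finite F] (hF : ringChar F ≠ 2) :
    ∃ a b : F, ¬IsSquare a ∧ ¬IsSquare b ∧ a + b = 1 := by
  have := Fintype.ofFinite F
  obtain ⟨c, hc⟩ := FiniteField.exists_nonsquare hF
  have hc0 : c ≠ 0 := by
    rintro rfl
    exact hc (IsSquare.zero)
  obtain ⟨x, y, hxy⟩ : ∃ x y : F, x ^ 2 + y ^ 2 = c := by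
    obtain ⟨x, y, h⟩ := FiniteField.exists_root_sum_quadratic (R := F)
      (Polynomial.degree_X_pow 2) (Polynomial.degree_X_pow_sub_C two_pos c)
      (FiniteField.odd_card_of_char_ne_two hF)
    refine ⟨x, y, ?_⟩
    linear_combination (by simpa using h : x ^ 2 + (y ^ 2 - c) = 0)
  have hnot {z w : F} (h : z ^ 2 + w ^ 2 = c) : ¬IsSquare (z ^ 2 / c) := by
    have hz : z ≠ 0 := by
      rintro rfl
      exact hc ⟨w, by linear_combination -h⟩
    intro hs
    refine hc ?_
    have e : c = z ^ 2 / (z ^ 2 / c) := by field_simp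
    rw [e]
    exact (IsSquare.sq z).div hs
  refine ⟨x ^ 2 / c, y ^ 2 / c, hnot hxy, hnot (by rwa [add_comm]), ?_⟩
  rw [← add_div, hxy, div_self hc0]

open IsLocalRing in
lemma exists_units_not_isSquare_add_eq_one [IsLocalRing R] [Finite R] (h2 : IsUnit (2 : R)) :
    ∃ u u' : Rˣ, ¬IsSquare u ∧ ¬IsSquare u' ∧ (u + u' : R) = 1 := by
  have : Finite (ResidueField R) := Finite.of_surjective _ residue_surjective
  have hchar : ringChar (ResidueField R) ≠ 2 := by
    intro h
    refine (h2.map (residue R)).ne_zero ?_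
    rw [map_ofNat]
    exact_mod_cast (ringChar.spec (ResidueField R) 2).2 h.dvd
  obtain ⟨a, b, ha, hb, hab⟩ := exists_not_isSquare_add_eq_one hchar
  obtain ⟨a, rfl⟩ := residue_surjective a
  obtain rfl : b = residue R (1 - a) := by rw [map_sub, map_one]; linear_combination hab
  have hlift {x : R} (hx : ¬IsSquare (residue R x)) : ∃ u : Rˣ, u = x ∧ ¬IsSquare u := by
    have hu : IsUnit x := (residue_ne_zero_iff_isUnit x).1 fun h => hx (h ▸ IsSquare.zero)
    exact ⟨hu.unit, rfl, fun h => hx ((h.map (Units.coeHom R)).map (residue R))⟩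
  obtain ⟨u, rfl, hu⟩ := hlift ha
  obtain ⟨u', hu', hns⟩ := hlift hb
  exact ⟨u, u', hu, hns, by rw [hu', add_sub_cancel]⟩

theorem factors_of_isCyclic [IsLocalRing R] [Finite R] [IsCyclic Rˣ] (h2 : IsUnit (2 : R))
    (D : SteinbergData R G) : D.Factors := by
  obtain ⟨u, u', hu, hu', hadd⟩ := exists_units_not_isSquare_add_eq_one h2
  exact factors_of_torus_mul (D.torus_mul_of_isCyclic hu hu' hadd)

end CyclicUnits

section OddLevel

lemma isLocalRing_zmod_prime_pow {p n : ℕ} (hp : p.Prime) (hn : n ≠ 0) :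
    IsLocalRing (ZMod (p ^ n)) := by
  have := Fact.mk hp
  have : Fact (1 < p ^ n) := ⟨Nat.one_lt_pow hn hp.one_lt⟩
  exact IsLocalRing.of_surjective' (PadicInt.toZModPow n) (ZMod.ringHom_surjective _)

theorem factors_of_odd {m : ℕ} (hm : Odd m) {G : Type*} [Group G] (D : SteinbergData (ZMod m) G) :
    D.Factors := by
  induction m using Nat.recOnPosPrimePosCoprime with
  | prime_pow p n hp hn =>
    have hp2 : p ≠ 2 := by
      rintro rfl
      exact Nat.not_odd_iff_even.2 (Nat.even_pow.2 ⟨even_two, hn.ne'⟩) hm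
    have := isLocalRing_zmod_prime_pow hp hn.ne'
    have : NeZero (p ^ n) := ⟨pow_ne_zero _ hp.ne_zero⟩
    have := ZMod.isCyclic_units_of_prime_pow p hp hp2 n
    refine factors_of_isCyclic ?_ D
    exact_mod_cast (ZMod.isUnit_iff_coprime 2 (p ^ n)).2 (Nat.coprime_two_left.2 hm)
  | zero => exact absurd hm (by decide)
  | one => exact factors_of_subsingleton D
  | coprime a b _ _ hab iha ihb =>
    rw [Nat.odd_mul] at hm
    exact .of_comap (ZMod.chineseRemainder hab).symm (.prod _ (iha hm.1 _) (ihb hm.2 _))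

end OddLevel

section EvenLevel

lemma torus_neg_of_mem {R G : Type*} [CommRing R] [Group G] {D : SteinbergData R G}
    {H : Subgroup Rˣ} (hH : ∀ a ∈ H, ∀ b ∈ H, D.torus (a * b) = D.torus a * D.torus b) {a : Rˣ}
    (ha : a ∈ H) : D.torus (-a) = D.torus (-1) * D.torus a := by
  have h := hH a⁻¹ (inv_mem ha) a ha
  rw [inv_mul_cancel, torus_one] at h
  rw [← inv_eq_of_mul_eq_one_right h.symm, ← D.torus_neg_inv, inv_inv]

lemma torus_mul_of_mem_or_neg_mem {R G : Type*} [CommRing R] [Group G] {D : SteinbergData R G}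
    {H : Subgroup Rˣ} (hH : ∀ a ∈ H, ∀ b ∈ H, D.torus (a * b) = D.torus a * D.torus b)
    (hneg : D.torus (-1 * -1) = D.torus (-1) * D.torus (-1)) (hmem : ∀ x : Rˣ, x ∈ H ∨ -x ∈ H)
    (x y : Rˣ) : D.torus (x * y) = D.torus x * D.torus y := by
  have hc (z : Rˣ) : Commute (D.torus (-1)) (D.torus z) := by
    refine D.commute_torus (fun w => ?_) (fun w => ?_) z
    · simpa [Commute] using D.torus_semiconj_upper (-1) w
    · simpa [Commute] using D.torus_semiconj_lower (-1) w
  have hmul {x y : Rˣ} (hx : x ∈ H) : D.torus (x * y) = D.torus x * D.torus y := by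
    rcases hmem y with hy | hy
    · exact hH x hx y hy
    · obtain ⟨y, rfl⟩ : ∃ z, y = -z := ⟨-y, (neg_neg y).symm⟩
      rw [neg_neg] at hy
      rw [mul_neg, torus_neg_of_mem hH (mul_mem hx hy), torus_neg_of_mem hH hy, hH x hx y hy,
        (hc x).left_comm]
  have hneg_mul (y : Rˣ) : D.torus (-y) = D.torus (-1) * D.torus y := by
    rcases hmem y with hy | hy
    · exact torus_neg_of_mem hH hy
    · have h := torus_neg_of_mem hH hy
      rw [neg_neg] at h
      rw [h, ← mul_assoc, ← hneg, neg_mul_neg, mul_one, torus_one, one_mul]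
  rcases hmem x with hx | hx
  · exact hmul hx
  · rw [← neg_neg x, neg_mul, hneg_mul, hmul hx, ← mul_assoc, ← hneg_mul]

lemma index_zpowers_of_eq_neg_three {n : ℕ} {r : (ZMod (2 ^ (n + 2)))ˣ}
    (hr : (r : ZMod (2 ^ (n + 2))) = -3) : (Subgroup.zpowers r).index = 2 := by
  have hcard : Nat.card (Subgroup.zpowers r) = 2 ^ n := by
    rw [Nat.card_zpowers, ← orderOf_units, hr,
      ← ZMod.orderOf_one_add_four_mul (-1) (by decide) n]
    congr 1
    norm_num
  have h := (Subgroup.zpowers r).card_mul_index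
  rw [hcard, Nat.card_eq_fintype_card, ZMod.card_units_eq_totient,
    Nat.totient_prime_pow_succ Nat.prime_two] at h
  refine Nat.eq_of_mul_eq_mul_left (pow_pos two_pos n) (h.trans ?_)
  rw [pow_succ, Nat.add_one_sub_one, mul_one]

lemma neg_one_notMem_zpowers_of_eq_neg_three {n : ℕ} {r : (ZMod (2 ^ (n + 2)))ˣ}
    (hr : (r : ZMod (2 ^ (n + 2))) = -3) : -1 ∉ Subgroup.zpowers r := by
  have h4 : 4 ∣ 2 ^ (n + 2) := ⟨2 ^ n, by ring⟩
  let π := Units.map (ZMod.castHom h4 (ZMod 4)).toMonoidHom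
  have hπ : π r = 1 := by
    ext
    change ZMod.castHom h4 (ZMod 4) r = 1
    rw [hr, map_neg, map_ofNat]
    decide
  intro h
  have h1 : π (-1) = 1 := (Subgroup.zpowers_le (H := π.ker)).2 hπ h
  have h2 : π (-1) = -1 := by ext; simp [π]
  exact absurd (h2.symm.trans h1) (by decide)

lemma mem_zpowers_or_neg_mem_of_eq_three {e : ℕ} {r : (ZMod (2 ^ e))ˣ}
    (hr : (r : ZMod (2 ^ e)) = 3) (x : (ZMod (2 ^ e))ˣ) :
    x ∈ Subgroup.zpowers r ∨ -x ∈ Subgroup.zpowers r := by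
  match e with
  | 0 =>
    have : Subsingleton (ZMod (2 ^ 0)) := inferInstanceAs (Subsingleton (ZMod 1))
    exact Or.inl (Subsingleton.elim 1 x ▸ one_mem _)
  | 1 =>
    have : Subsingleton (ZMod (2 ^ 1))ˣ := inferInstanceAs (Subsingleton (ZMod 2)ˣ)
    exact Or.inl (Subsingleton.elim 1 x ▸ one_mem _)
  | n + 2 =>
    have hr' : ((-r : (ZMod (2 ^ (n + 2)))ˣ) : ZMod (2 ^ (n + 2))) = -3 := by rw [Units.val_neg, hr]
    have hmem {y : (ZMod (2 ^ (n + 2)))ˣ} (hy : y ∈ Subgroup.zpowers (-r)) :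
        y ∈ Subgroup.zpowers r ∨ -y ∈ Subgroup.zpowers r := by
      obtain ⟨i, rfl⟩ := hy
      rcases i.even_or_odd with hi | hi
      · exact Or.inl ⟨i, (hi.neg_zpow r).symm⟩
      · exact Or.inr ⟨i, by simp [hi.neg_zpow]⟩
    by_cases hx : x ∈ Subgroup.zpowers (-r)
    · exact hmem hx
    · have hnx : -1 * x ∈ Subgroup.zpowers (-r) :=
        (Subgroup.mul_mem_iff_of_index_two (index_zpowers_of_eq_neg_three hr')).2
          (iff_of_false (neg_one_notMem_zpowers_of_eq_neg_three hr') hx)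
      simpa [or_comm] using hmem hnx

lemma fst_torus_mul {R₁ R₂ G : Type*} [CommRing R₁] [CommRing R₂] [Group G]
    (D : SteinbergData (R₁ × R₂) G) (h₂ : D.snd.Factors) {x y : (R₁ × R₂)ˣ}
    (h : D.torus (x * y) = D.torus x * D.torus y) :
    D.fst.torus (Units.map (RingHom.fst R₁ R₂) (x * y)) =
      D.fst.torus (Units.map (RingHom.fst R₁ R₂) x) *
        D.fst.torus (Units.map (RingHom.fst R₁ R₂) y) := by
  have htorus (z : (R₁ × R₂)ˣ) : D.torus z =
      D.fst.torus (Units.map (RingHom.fst R₁ R₂) z) *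
        D.snd.torus (Units.map (RingHom.snd R₁ R₂) z) := by
    rw [← torus_prod]
    rfl
  have hc := D.commute_of_mem_generated
    (D.fst.torus_mem_generated (Units.map (RingHom.fst R₁ R₂) y))
    (D.snd.torus_mem_generated (Units.map (RingHom.snd R₁ R₂) x))
  rw [htorus, htorus, htorus, map_mul (Units.map (RingHom.snd R₁ R₂ : R₁ × R₂ →* R₂)), h₂.torus_mul,
    hc.symm.mul_mul_mul_comm] at h
  exact mul_right_cancel h

lemma comap_torus {R R₁ G : Type*} [CommRing R] [CommRing R₁] [Group G] (D : SteinbergData R G)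
    (f : R₁ →+* R) (v : R₁ˣ) : (D.comap f).torus v = D.torus (Units.map f v) := by
  simp [torus, weyl, comap, ← map_inv]

lemma factors_of_torus_mul_of_mem {R₁ R₂ G : Type*} [CommRing R₁] [IsLocalRing R₁] [CommRing R₂]
    [Group G] (D : SteinbergData (R₁ × R₂) G) (h₂ : D.snd.Factors) {H : Subgroup (R₁ × R₂)ˣ}
    (hH : ∀ a ∈ H, ∀ b ∈ H, D.torus (a * b) = D.torus a * D.torus b)
    (hneg : D.torus (-1 * -1) = D.torus (-1) * D.torus (-1))
    (hmem : ∀ x : R₁ˣ, x ∈ H.map (Units.map (RingHom.fst R₁ R₂ : R₁ × R₂ →* R₁)) ∨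
      -x ∈ H.map (Units.map (RingHom.fst R₁ R₂ : R₁ × R₂ →* R₁))) : D.Factors := by
  refine .prod D (factors_of_torus_mul (torus_mul_of_mem_or_neg_mem ?_ ?_ hmem)) h₂
  · rintro _ ⟨a, ha, rfl⟩ _ ⟨b, hb, rfl⟩
    rw [← map_mul]
    exact D.fst_torus_mul h₂ (hH a ha b hb)
  · have h1 : Units.map (RingHom.fst R₁ R₂ : R₁ × R₂ →* R₁) (-1) = -1 := by ext; simp
    simpa [h1] using D.fst_torus_mul h₂ hneg

theorem factors_of_torus_mul_of_mem_zpowers_three {N : ℕ} (hN : N ≠ 0) {G : Type*} [Group G]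
    (D : SteinbergData (ZMod N) G) {P : (ZMod N)ˣ} (hP : (P : ZMod N) = 3)
    (hpow : ∀ a ∈ Subgroup.zpowers P, ∀ b ∈ Subgroup.zpowers P,
      D.torus (a * b) = D.torus a * D.torus b)
    (hneg : D.torus (-1 * -1) = D.torus (-1) * D.torus (-1)) : D.Factors := by
  obtain ⟨e, m, hm, rfl⟩ := Nat.exists_eq_two_pow_mul_odd hN
  rcases eq_or_ne e 0 with rfl | he
  · exact factors_of_odd (by simpa using hm) D
  have := isLocalRing_zmod_prime_pow Nat.prime_two he
  let f := ZMod.chineseRemainder (Nat.Coprime.pow_left e (Nat.coprime_two_left.2 hm))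
  let F : (ZMod (2 ^ e * m))ˣ →* (ZMod (2 ^ e) × ZMod m)ˣ := Units.map (f : _ →* _)
  have htorus (z) : (D.comap (f.symm : _ →+* _)).torus (F z) = D.torus z := by
    rw [comap_torus]
    congr 1
    ext
    simp [F]
  refine .of_comap f.symm (factors_of_torus_mul_of_mem _ (factors_of_odd hm _)
    (H := (Subgroup.zpowers P).map F) ?_ ?_ ?_)
  · rintro _ ⟨a, ha, rfl⟩ _ ⟨b, hb, rfl⟩
    rw [← map_mul, htorus, htorus, htorus, hpow a ha b hb]
  · have h1 : F (-1) = -1 := by ext1; simp [F]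
    rw [← h1, ← map_mul, htorus, htorus, hneg]
  · simp only [MonoidHom.map_zpowers]
    refine mem_zpowers_or_neg_mem_of_eq_three ?_
    change (f P).1 = 3
    rw [hP, map_ofNat]
    rfl

end EvenLevel

end SteinbergData

section Arithmetic

lemma exists_eq_mul_coprime_dvd_pow (a : ℕ) {D : ℕ} (hD : D ≠ 0) :
    ∃ W Z k : ℕ, D = W * Z ∧ Z.Coprime a ∧ W ∣ a ^ k := by
  induction D using Nat.strong_induction_on with
  | _ D ih =>
    by_cases hDa : D.Coprime a
    · exact ⟨1, D, 0, by simp, hDa, by simp⟩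
    · obtain ⟨D', hD'⟩ := Nat.gcd_dvd_left D a
      have hD'0 : D' ≠ 0 := by rintro rfl; exact hD (by simpa using hD')
      have hgcd : 1 < D.gcd a :=
        lt_of_le_of_ne (Nat.gcd_pos_of_pos_left a (Nat.pos_of_ne_zero hD)) (Ne.symm hDa)
      have hlt : D' < D := by
        conv_rhs => rw [hD']
        exact lt_mul_of_one_lt_left (Nat.pos_of_ne_zero hD'0) hgcd
      obtain ⟨W, Z, k, hWZ, hZ, hW⟩ := ih D' hlt hD'0
      refine ⟨D.gcd a * W, Z, k + 1, ?_, hZ, ?_⟩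
      · rw [mul_assoc, ← hWZ, ← hD']
      · rw [pow_succ']
        exact mul_dvd_mul (Nat.gcd_dvd_right D a) hW

lemma exists_one_add_mul_eq_of_isIdempotentElem {N U : ℕ} [NeZero N] (hU : 1 < U) {e : ZMod N}
    (he : IsIdempotentElem e) :
    ∃ X Y : ℤ, 1 + X * Y = U ∧ (X : ZMod N) ∣ e ∧ (Y : ZMod N) ∣ 1 - e := by
  obtain ⟨W, Z, k, hWZ, hZ, hW⟩ := exists_eq_mul_coprime_dvd_pow e.val (Nat.sub_ne_zero_of_lt hU)
  refine ⟨W, Z, by rw [← Nat.cast_mul, ← hWZ]; grind, ?_, ?_⟩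
  · have hdvd : (W : ZMod N) ∣ e ^ k := by
      simpa using map_dvd (Nat.castRingHom (ZMod N)) hW
    rw [← he.pow_succ_eq k, pow_succ]
    exact_mod_cast hdvd.mul_right e
  · obtain ⟨α, β, hαβ⟩ := Nat.isCoprime_iff_coprime.mpr hZ
    have hcast := congrArg (Int.cast : ℤ → ZMod N) hαβ
    push_cast [ZMod.natCast_zmod_val] at hcast
    refine ⟨α * (1 - e), ?_⟩
    push_cast
    linear_combination (1 - e) * (-hcast) - β * he.eq

lemma exists_pow_sub_one_eq_mul {q W v : ℤ} (hv : v ≠ 0) (hq : v ∣ q - 1) (hW : IsCoprime W v) :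
    ∃ (m : ℕ) (M : ℤ), q ^ m - 1 = M * (q - 1) ∧ v ∣ 1 + W * M := by
  obtain ⟨a, b, hab⟩ := hW
  obtain ⟨m, hm⟩ := Int.eq_ofNat_of_zero_le (Int.emod_nonneg (-a) hv)
  refine ⟨m, ∑ i ∈ Finset.range m, q ^ i, (geom_sum_mul q m).symm, ?_⟩
  have hsum : ∑ i ∈ Finset.range m, q ^ i ≡ m [ZMOD v] := by
    have hpow (i : ℕ) : q ^ i ≡ 1 [ZMOD v] := by
      simpa using ((Int.modEq_iff_dvd.mpr hq).symm.pow i)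
    simpa using Int.ModEq.sum (s := Finset.range m) fun i _ => hpow i
  have hma : (m : ℤ) ≡ -a [ZMOD v] := by simpa [hm] using Int.mod_modEq (-a) v
  refine Int.modEq_zero_iff_dvd.mp (((hsum.trans hma).mul_left W |>.add_left 1).trans ?_)
  exact Int.modEq_zero_iff_dvd.mpr ⟨b, by linear_combination -hab⟩

lemma exists_pow_eq_one_sub_mul {U v N : ℕ} (hU : 1 < U) (hUv : U.Coprime v) (hUN : U.Coprime N)
    (hvN : v.Coprime N) :
    ∃ (s t v' : ℤ) (j : ℕ), v' * v = 1 + s ∧ (N : ℤ) ∣ s ∧ IsCoprime t N ∧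
      1 - s * v * t = (U : ℤ) ^ j := by
  have hv : v ≠ 0 := by rintro rfl; exact hU.ne' (by simpa using hUv)
  have hN : N ≠ 0 := by rintro rfl; exact hU.ne' (by simpa using hUN)
  set j := (v * N).totient
  have hUj : 1 < U ^ j :=
    Nat.one_lt_pow (Nat.totient_pos.mpr (Nat.pos_of_ne_zero (mul_ne_zero hv hN))).ne' hU
  have hdvd : v * N ∣ U ^ j - 1 :=
    (Nat.modEq_iff_dvd' hUj.le).mp (Nat.ModEq.pow_totient (hUv.mul_right hUN)).symm
  obtain ⟨W, Z, k, hWZ, hZ, hW⟩ := exists_eq_mul_coprime_dvd_pow N (Nat.sub_ne_zero_of_lt hUj)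
  have hvW : v.Coprime W := (hvN.pow_right k).coprime_dvd_right hW
  have hNW : N ∣ W := hZ.symm.dvd_of_dvd_mul_right (hWZ ▸ dvd_of_mul_left_dvd hdvd)
  obtain ⟨Z, rfl⟩ : v ∣ Z := hvW.dvd_of_dvd_mul_left (hWZ ▸ dvd_of_mul_right_dvd hdvd)
  have hWZ' : (U : ℤ) ^ j - 1 = W * (v * Z) := by
    rw [← Nat.cast_pow, ← Nat.cast_pred (by lia)]
    exact_mod_cast hWZ
  obtain ⟨m, M, hM, v', hv'⟩ := exists_pow_sub_one_eq_mul (Nat.cast_ne_zero.mpr hv)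
    (hWZ' ▸ ((dvd_mul_right (v : ℤ) Z).mul_left _)) (Nat.isCoprime_iff_coprime.mpr hvW.symm)
  refine ⟨W * M, -Z, v', j * m, by rw [hv', mul_comm],
    (Int.natCast_dvd_natCast.mpr hNW).mul_right M,
    (Nat.isCoprime_iff_coprime.mpr hZ.coprime_mul_left).neg_left, ?_⟩
  rw [pow_mul]
  linear_combination -M * hWZ' - hM

end Arithmetic

section ModularGroup

lemma S_mul_lowerSL (c : ℤ) : ModularGroup.S * lowerSL c = upperSL (-c) * ModularGroup.S :=
  coe_SL_injective (by simp [ModularGroup.coe_S])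

lemma S_mul_upperSL (b : ℤ) : ModularGroup.S * upperSL b = lowerSL (-b) * ModularGroup.S :=
  coe_SL_injective (by simp [ModularGroup.coe_S])

lemma S_mul_S : ModularGroup.S * ModularGroup.S = -1 :=
  coe_SL_injective (by simpa using ModularGroup.S_mul_S_eq)

lemma T_eq_upperSL : ModularGroup.T = upperSL 1 := rfl

lemma S_eq_upperSL_mul_lowerSL_mul_upperSL :
    ModularGroup.S = upperSL (-1) * lowerSL 1 * upperSL (-1) :=
  coe_SL_injective (by simp [ModularGroup.coe_S])

lemma hom_ext_S_T {H : Type*} [Group H] {f f' : SL(2, ℤ) →* H}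
    (hS : f ModularGroup.S = f' ModularGroup.S) (hT : f ModularGroup.T = f' ModularGroup.T) :
    f = f' :=
  MonoidHom.eq_of_eqOn_dense SpecialLinearGroup.SL2Z_generators
    (by rintro x (rfl | rfl) <;> assumption)

/-- The graph of conjugation by `[[m, 0], [0, 1]]`: the pairs `(A, B)` in `SL₂(ℤ)` with
`[[m, 0], [0, 1]] A = B [[m, 0], [0, 1]]`. -/
def diagonalConj (m : ℤ) : Subgroup (SL(2, ℤ) × SL(2, ℤ)) where
  carrier := {P | SemiconjBy !![m, 0; 0, 1] (P.1 : Matrix (Fin 2) (Fin 2) ℤ) P.2}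
  one_mem' := by simp
  mul_mem' := by
    rintro ⟨A, B⟩ ⟨A', B'⟩ h h'
    simpa using SemiconjBy.mul_right h h'
  inv_mem' := by
    rintro ⟨A, B⟩ h
    exact SemiconjBy.units_inv_right (x := Matrix.SpecialLinearGroup.toGL A)
      (y := Matrix.SpecialLinearGroup.toGL B) h

lemma mem_diagonalConj {m : ℤ} (hm : m ≠ 0) {A B : SL(2, ℤ)} :
    (A, B) ∈ diagonalConj m ↔
      A 0 0 = B 0 0 ∧ A 1 1 = B 1 1 ∧ A 1 0 = m * B 1 0 ∧ B 0 1 = m * A 0 1 := by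
  change !![m, 0; 0, 1] * A.1 = B.1 * !![m, 0; 0, 1] ↔ _
  simp only [← Matrix.ext_iff, Fin.forall_fin_two, Matrix.mul_apply, Fin.sum_univ_two,
    Matrix.of_apply, Matrix.cons_val]
  have hcancel : m * A 0 0 = B 0 0 * m ↔ A 0 0 = B 0 0 := by rw [mul_comm, mul_left_inj' hm]
  grind

lemma exists_two_mul_abs_add_mul_le (a : ℤ) {m : ℤ} (hm : m ≠ 0) :
    ∃ x : ℤ, 2 * |a + x * m| ≤ |m| := by
  refine ⟨-round (a / m : ℚ), ?_⟩
  have hm' : (m : ℚ) ≠ 0 := mod_cast hm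
  have h : (a + -round (a / m : ℚ) * m : ℚ) = m * (a / m - round (a / m : ℚ)) := by
    field_simp
    ring
  have hround := mul_le_mul_of_nonneg_left (abs_sub_round (a / m : ℚ)) (abs_nonneg (m : ℚ))
  rw [← abs_mul, ← h] at hround
  have habs : 2 * |(a + -round (a / m : ℚ) * m : ℚ)| ≤ |(m : ℚ)| := by linarith
  exact_mod_cast habs

lemma exists_abs_lowerSL_mul_upperSL_mul_lt {p : ℕ} (hp : 1 < p) (hp' : p < 4) {A B : SL(2, ℤ)}
    (hAB : (A, B) ∈ diagonalConj p) (hB : B 1 0 ≠ 0) :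
    ∃ x y : ℤ, |(lowerSL y * upperSL (p * x) * B) 1 0| < |B 1 0| := by
  obtain ⟨h00, -, h10, -⟩ := (mem_diagonalConj (by lia)).mp hAB
  obtain ⟨x, hx⟩ := exists_two_mul_abs_add_mul_le (B 0 0) (m := p * B 1 0)
    (mul_ne_zero (by lia) hB)
  set a := B 0 0 + x * (p * B 1 0) with ha
  have ha0 : a ≠ 0 := by
    intro ha0
    have hdet := Matrix.det_fin_two A.1
    rw [A.det_coe, h00, h10] at hdet
    have hunit : (p : ℤ) * (-(x * B 1 0 * A 1 1) - A 0 1 * B 1 0) = 1 := by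
      linear_combination A 1 1 * (ha - ha0) - hdet
    have := Int.isUnit_iff.mp (IsUnit.of_mul_eq_one _ hunit)
    lia
  obtain ⟨y, hy⟩ := exists_two_mul_abs_add_mul_le (B 1 0) ha0
  refine ⟨x, y, ?_⟩
  have hentry : (lowerSL y * upperSL (p * x) * B) 1 0 = B 1 0 + y * a := by
    simp only [Matrix.SpecialLinearGroup.coe_mul, Matrix.mul_apply, Fin.sum_univ_two, coe_upperSL,
      coe_lowerSL, Matrix.of_apply, Matrix.cons_val, ha]
    ring
  have hpB : |(p : ℤ) * B 1 0| ≤ 3 * |B 1 0| := by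
    rw [abs_mul, Nat.abs_cast]
    exact mul_le_mul_of_nonneg_right (by lia) (abs_nonneg _)
  have := abs_pos.mpr hB
  rw [hentry]
  linarith

lemma upperSL_mem_diagonalConj (m x : ℤ) : (upperSL x, upperSL (m * x)) ∈ diagonalConj m := by
  change _ * _ = _ * _
  simp

lemma lowerSL_mem_diagonalConj (m x : ℤ) : (lowerSL (m * x), lowerSL x) ∈ diagonalConj m := by
  change _ * _ = _ * _
  simp [mul_comm]

lemma eq_or_eq_neg_of_mem_diagonalConj {m : ℤ} (hm : m ≠ 0) {A B : SL(2, ℤ)}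
    (hAB : (A, B) ∈ diagonalConj m) (hB : B 1 0 = 0) :
    ∃ x : ℤ, (A, B) = (upperSL x, upperSL (m * x)) ∨
      (A, B) = (-1, -1) * (upperSL x, upperSL (m * x)) := by
  obtain ⟨h00, h11, h10, h01⟩ := (mem_diagonalConj hm).mp hAB
  have hdet := Matrix.det_fin_two A.1
  rw [A.det_coe, h10, hB, mul_zero, mul_zero, sub_zero] at hdet
  rcases Int.mul_eq_one_iff_eq_one_or_neg_one.mp hdet.symm with ⟨ha, hd⟩ | ⟨ha, hd⟩
  · refine ⟨A 0 1, .inl (Prod.ext (coe_SL_injective ?_) (coe_SL_injective ?_))⟩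
    · exact (Matrix.eta_fin_two A.1).trans (by simp [ha, hd, h10, hB])
    · exact (Matrix.eta_fin_two B.1).trans (by simp [← h00, ← h11, ha, hd, h01, hB])
  · refine ⟨-A 0 1, .inr (Prod.ext (coe_SL_injective ?_) (coe_SL_injective ?_))⟩
    · exact (Matrix.eta_fin_two A.1).trans (by simp [ha, hd, h10, hB])
    · exact (Matrix.eta_fin_two B.1).trans (by simp [← h00, ← h11, ha, hd, h01, hB])

-- Euclidean descent on the lower left entry, which shrinks because `p < 4`.
lemma diagonalConj_le {p : ℕ} (hp : 1 < p) (hp' : p < 4) {K : Subgroup (SL(2, ℤ) × SL(2, ℤ))}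
    (hupper : (upperSL 1, upperSL (p : ℤ)) ∈ K) (hlower : (lowerSL (p : ℤ), lowerSL 1) ∈ K)
    (hneg : (-1, -1) ∈ K) : diagonalConj p ≤ K := by
  have hupper' (x : ℤ) : (upperSL x, upperSL (p * x)) ∈ K := by
    simpa [upperSL_zpow, mul_comm] using K.zpow_mem hupper x
  have hlower' (x : ℤ) : (lowerSL (p * x), lowerSL x) ∈ K := by
    simpa [lowerSL_zpow, mul_comm] using K.zpow_mem hlower x
  rintro ⟨A, B⟩ hAB
  induction hn : (B 1 0).natAbs using Nat.strong_induction_on generalizing A B with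
  | _ n ih =>
    by_cases hB : B 1 0 = 0
    · obtain ⟨x, h | h⟩ := eq_or_eq_neg_of_mem_diagonalConj (by lia) hAB hB
      · exact h ▸ hupper' x
      · exact h ▸ K.mul_mem hneg (hupper' x)
    · obtain ⟨x, y, hxy⟩ := exists_abs_lowerSL_mul_upperSL_mul_lt hp hp' hAB hB
      have hmem := mul_mem (lowerSL_mem_diagonalConj p y) (upperSL_mem_diagonalConj p x)
      refine (K.mul_mem_cancel_left (K.mul_mem (hlower' y) (hupper' x))).mp
        (ih _ ?_ _ _ (mul_mem hmem hAB) rfl)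
      exact hn ▸ Int.natAbs_lt_iff_sq_lt.mpr (sq_lt_sq.mpr hxy)

end ModularGroup

/-- The endomorphism `θ` acts on `ρ` as a Galois automorphism raising roots of unity to the `p`-th
power acts on the representation attached to modular data; `γ` is the signed permutation by which
it moves `ρ S`. -/
structure IsGaloisTwist {H : Type*} [Group H] (ρ : SL(2, ℤ) →* H) (p : ℕ) (θ : Monoid.End H)
    (γ : H) : Prop where
  map_T : θ (ρ ModularGroup.T) = ρ ModularGroup.T ^ p
  map_S : θ (ρ ModularGroup.S) = γ * ρ ModularGroup.S
  map_twist : θ γ = γ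
  twist_mul_S_mul_twist : γ * ρ ModularGroup.S * γ = ρ ModularGroup.S
  semiconj_T : SemiconjBy γ (ρ ModularGroup.T) (ρ ModularGroup.T ^ p ^ 2)

/-- `ρ A` only depends on the lower left and upper right entries of `A`, in the way dictated by
the case of upper left entry `1`, as soon as the upper left entry of `A` is a power of `U`. -/
def CornerInvariant {H : Type*} [Group H] (ρ : SL(2, ℤ) →* H) (U : ℕ) : Prop :=
  ∀ (j : ℕ) (A : SL(2, ℤ)), A 0 0 = (U : ℤ) ^ j → ρ A = ρ (lowerSL (A 1 0)) * ρ (upperSL (A 0 1))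

section GaloisTwist

variable {H : Type*} [Group H] {ρ : SL(2, ℤ) →* H} {p : ℕ} {θ : Monoid.End H} {γ : H}

lemma map_upperSL_eq_zpow (ρ : SL(2, ℤ) →* H) (x : ℤ) :
    ρ (upperSL x) = ρ ModularGroup.T ^ x := by
  rw [T_eq_upperSL, ← map_zpow, upperSL_zpow, Int.cast_id, mul_one]

lemma map_lowerSL_eq_conj (ρ : SL(2, ℤ) →* H) (x : ℤ) :
    ρ (lowerSL x) = (ρ ModularGroup.S)⁻¹ * ρ ModularGroup.T ^ (-x) * ρ ModularGroup.S := by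
  rw [mul_assoc, eq_inv_mul_iff_mul_eq, ← map_upperSL_eq_zpow, ← map_mul, ← map_mul,
    S_mul_lowerSL]

lemma IsGaloisTwist.semiconj_upperSL (h : IsGaloisTwist ρ p θ γ) (x : ℤ) :
    SemiconjBy γ (ρ (upperSL x)) (ρ (upperSL (p ^ 2 * x))) := by
  rw [map_upperSL_eq_zpow, map_upperSL_eq_zpow, zpow_mul]
  exact_mod_cast h.semiconj_T.zpow_right x

lemma IsGaloisTwist.pow (h : IsGaloisTwist ρ p θ γ) (i : ℕ) :
    IsGaloisTwist ρ (p ^ i) (θ ^ i) (γ ^ i) := by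
  induction i with
  | zero => constructor <;> simp
  | succ i ih =>
    refine ⟨?_, ?_, ?_, ?_, ?_⟩
    · rw [pow_succ θ, Monoid.End.coe_mul, Function.comp_apply, h.map_T, map_pow, ih.map_T,
        ← pow_mul, ← pow_succ]
    · rw [pow_succ' θ, Monoid.End.coe_mul, Function.comp_apply, ih.map_S, map_mul, map_pow,
        h.map_twist, h.map_S, ← mul_assoc, ← pow_succ]
    · rw [map_pow, Monoid.End.coe_pow, Function.IsFixedPt.iterate h.map_twist]
    · calc γ ^ (i + 1) * ρ ModularGroup.S * γ ^ (i + 1)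
          = γ ^ i * (γ * ρ ModularGroup.S * γ) * γ ^ i := by
            nth_rw 2 [pow_succ']
            simp only [pow_succ, mul_assoc]
        _ = ρ ModularGroup.S := by rw [h.twist_mul_S_mul_twist, ih.twist_mul_S_mul_twist]
    · have hsemi := (h.semiconj_T.pow_right ((p ^ i) ^ 2)).mul_left ih.semiconj_T
      rwa [← pow_succ', ← pow_mul, ← mul_pow, ← pow_succ'] at hsemi

lemma IsGaloisTwist.map_of_mem_diagonalConj (h : IsGaloisTwist ρ p θ γ) (hp : 1 < p) (hp' : p < 4)
    {A B : SL(2, ℤ)} (hAB : (A, B) ∈ diagonalConj p) : θ (ρ A) = ρ B := by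
  let K : Subgroup (SL(2, ℤ) × SL(2, ℤ)) :=
    MonoidHom.eqLocus ((MonoidHom.comp θ ρ).comp (.fst _ _)) (ρ.comp (.snd _ _))
  suffices hK : diagonalConj p ≤ K from hK hAB
  refine diagonalConj_le hp hp' ?_ ?_ ?_
  · change θ (ρ (upperSL 1)) = ρ (upperSL p)
    rw [map_upperSL_eq_zpow ρ p, zpow_natCast]
    exact h.map_T
  · change θ (ρ (lowerSL p)) = ρ (lowerSL 1)
    have hconj : θ (ρ ModularGroup.T ^ (-p : ℤ)) = γ * ρ ModularGroup.T ^ (-1 : ℤ) * γ⁻¹ := by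
      rw [eq_mul_inv_iff_mul_eq, (h.semiconj_T.zpow_right (-1)).eq, map_zpow, h.map_T]
      simp only [← zpow_natCast, Nat.cast_pow]
      group
    rw [map_lowerSL_eq_conj, map_lowerSL_eq_conj, map_mul, map_mul, map_inv, h.map_S, hconj]
    group
  · change θ (ρ (-1)) = ρ (-1)
    rw [← S_mul_S, map_mul, map_mul, h.map_S, ← mul_assoc, h.twist_mul_S_mul_twist]

lemma pow_map_of_mem_diagonalConj (hp : p ≠ 0)
    (hθ : ∀ {A B : SL(2, ℤ)}, (A, B) ∈ diagonalConj p → θ (ρ A) = ρ B) (i : ℕ) {A B : SL(2, ℤ)}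
    (hAB : (A, B) ∈ diagonalConj (p ^ i)) : (θ ^ i) (ρ A) = ρ B := by
  have hp0 : (p : ℤ) ≠ 0 := mod_cast hp
  induction i generalizing A with
  | zero =>
    have hAB' : A = B := coe_SL_injective <| by
      simpa [diagonalConj, ← Matrix.one_fin_two, SemiconjBy] using hAB
    simp [hAB']
  | succ i ih =>
    obtain ⟨h00, h11, h10, h01⟩ := (mem_diagonalConj (pow_ne_zero _ hp0)).mp hAB
    let C : SL(2, ℤ) := ⟨!![A 0 0, p * A 0 1; p ^ i * B 1 0, A 1 1], by
      have hdet := Matrix.det_fin_two A.1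
      rw [A.det_coe, h10] at hdet
      rw [Matrix.det_fin_two_of]
      linear_combination -hdet⟩
    have hAC : (A, C) ∈ diagonalConj p :=
      (mem_diagonalConj hp0).mpr ⟨rfl, rfl, by simp [C, h10, pow_succ']; ring, rfl⟩
    have hCB : (C, B) ∈ diagonalConj (p ^ i) :=
      (mem_diagonalConj (pow_ne_zero _ hp0)).mpr
        ⟨h00, h11, rfl, by simp [C, h01, pow_succ, mul_assoc]⟩
    rw [pow_succ, Monoid.End.coe_mul, Function.comp_apply, hθ hAC, ih hCB]

-- Since `θ` fixes the image of `ρ`, the element `ρ (S A)` equals `ρ (B)` for the conjugate `B` of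
-- `S A` by `diag(p, 1)`, and `B` is `S` times a product of two elementary matrices.
lemma IsGaloisTwist.map_eq_of_apply_zero_zero (h : IsGaloisTwist ρ p θ 1) (hp : p ≠ 0)
    (hθ : ∀ {A B : SL(2, ℤ)}, (A, B) ∈ diagonalConj p → θ (ρ A) = ρ B)
    (hT : ρ ModularGroup.T ^ p = ρ ModularGroup.T) {A : SL(2, ℤ)} (hA : A 0 0 = p) :
    ρ A = ρ (lowerSL (A 1 0)) * ρ (upperSL (A 0 1)) := by
  have hfix : MonoidHom.comp θ ρ = ρ :=
    hom_ext_S_T (h.map_S.trans (one_mul _)) (h.map_T.trans hT)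
  have hmem : (ModularGroup.S * A, ModularGroup.S * lowerSL (A 1 0) * upperSL (A 0 1)) ∈
      diagonalConj p := by
    have hdet := Matrix.det_fin_two A.1
    rw [A.det_coe, hA] at hdet
    refine (mem_diagonalConj (mod_cast hp)).mpr ?_
    simp only [Matrix.SpecialLinearGroup.coe_mul, ModularGroup.coe_S, coe_lowerSL, coe_upperSL,
      Matrix.mul_apply, Fin.sum_univ_two, Matrix.of_apply, Matrix.cons_val, hA]
    exact ⟨by ring, by ring, by ring, by linear_combination -hdet⟩
  have hS := (DFunLike.congr_fun hfix (ModularGroup.S * A)).symm.trans (hθ hmem)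
  rw [mul_assoc, map_mul, map_mul, mul_left_cancel_iff, map_mul] at hS
  exact hS

end GaloisTwist

section CornerInvariant

variable {H : Type*} [Group H] {ρ : SL(2, ℤ) →* H} {N U : ℕ}

lemma map_upperSL_congr (hT : ρ ModularGroup.T ^ N = 1) {a b : ℤ} (hab : (a : ZMod N) = b) :
    ρ (upperSL a) = ρ (upperSL b) := by
  obtain ⟨c, hc⟩ := (ZMod.intCast_eq_intCast_iff_dvd_sub a b N).mp hab
  rw [map_upperSL_eq_zpow, map_upperSL_eq_zpow, ← sub_add_cancel b a, hc, zpow_add, zpow_mul,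
    zpow_natCast, hT, one_zpow, one_mul]

lemma map_lowerSL_congr (hT : ρ ModularGroup.T ^ N = 1) {a b : ℤ} (hab : (a : ZMod N) = b) :
    ρ (lowerSL a) = ρ (lowerSL b) := by
  simp only [map_lowerSL_eq_conj, ← map_upperSL_eq_zpow]
  rw [map_upperSL_congr hT (a := -a) (b := -b) (by push_cast; rw [hab])]

lemma map_upperSL_cast (hT : ρ ModularGroup.T ^ N = 1) (a : ℤ) :
    ρ (upperSL (a : ZMod N).cast) = ρ (upperSL a) :=
  map_upperSL_congr hT (by simp)

lemma map_lowerSL_cast (hT : ρ ModularGroup.T ^ N = 1) (a : ℤ) :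
    ρ (lowerSL (a : ZMod N).cast) = ρ (lowerSL a) :=
  map_lowerSL_congr hT (by simp)

lemma map_upperSL_mul (ρ : SL(2, ℤ) →* H) (a b : ℤ) :
    ρ (upperSL (a * b)) = ρ (upperSL a) ^ b := by
  rw [← map_zpow, upperSL_zpow, Int.cast_id, mul_comm]

lemma map_lowerSL_mul (ρ : SL(2, ℤ) →* H) (a b : ℤ) :
    ρ (lowerSL (a * b)) = ρ (lowerSL a) ^ b := by
  rw [← map_zpow, lowerSL_zpow, Int.cast_id, mul_comm]

lemma CornerInvariant.commute_of_one_add_mul_eq (hc : CornerInvariant ρ U) {X Y : ℤ}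
    (hXY : 1 + X * Y = U) : Commute (ρ (upperSL X)) (ρ (lowerSL Y)) := by
  have h := hc 1 (upperSL X * lowerSL Y) (by simp [Matrix.mul_apply, hXY])
  rw [map_mul] at h
  refine h.trans ?_
  simp [Matrix.mul_apply]

lemma CornerInvariant.commute [NeZero N] (hc : CornerInvariant ρ U)
    (hT : ρ ModularGroup.T ^ N = 1) (hU : 1 < U) {e : ZMod N} (he : IsIdempotentElem e)
    (x y : ZMod N) :
    Commute (ρ (upperSL (e * x).cast)) (ρ (lowerSL ((1 - e) * y).cast)) := by
  obtain ⟨X, Y, hXY, hX, hY⟩ := exists_one_add_mul_eq_of_isIdempotentElem hU he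
  obtain ⟨a, ha⟩ := hX.mul_right x
  obtain ⟨b, hb⟩ := hY.mul_right y
  obtain ⟨a, rfl⟩ := ZMod.intCast_surjective a
  obtain ⟨b, rfl⟩ := ZMod.intCast_surjective b
  rw [ha, hb, ← Int.cast_mul, ← Int.cast_mul, map_upperSL_cast hT, map_lowerSL_cast hT,
    map_upperSL_mul, map_lowerSL_mul]
  exact (hc.commute_of_one_add_mul_eq hXY).zpow_zpow a b

lemma CornerInvariant.semiconj_of_mul_eq (hc : CornerInvariant ρ U)
    (hT : ρ ModularGroup.T ^ N = 1) {s t v v' : ℤ} {j : ℕ} (hv : v' * v = 1 + s)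
    (hs : (N : ℤ) ∣ s) (ht : 1 - s * v * t = (U : ℤ) ^ j) :
    SemiconjBy (ρ (upperSL v' * lowerSL (-v) * upperSL v')) (ρ (upperSL t))
      (ρ (lowerSL (-(v * v) * t))) := by
  obtain rfl : s = v' * v - 1 := by linarith
  let A : SL(2, ℤ) := ⟨!![1 - (v' * v - 1) * v * t, (v' * v - 1) ^ 2 * t;
    -(v * v) * t, 1 + (v' * v - 1) * v * t], by rw [Matrix.det_fin_two_of]; ring⟩
  have hA : upperSL v' * lowerSL (-v) * upperSL v' * upperSL t =
      A * (upperSL v' * lowerSL (-v) * upperSL v') := by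
    have hAcoe : (A : Matrix (Fin 2) (Fin 2) ℤ) = !![1 - (v' * v - 1) * v * t,
      (v' * v - 1) ^ 2 * t; -(v * v) * t, 1 + (v' * v - 1) * v * t] := rfl
    refine coe_SL_injective ?_
    simp only [Matrix.SpecialLinearGroup.coe_mul, hAcoe, coe_upperSL, coe_lowerSL,
      Matrix.mul_fin_two]
    congr 3 <;> grind
  have hs' : ((v' * v - 1 : ℤ) : ZMod N) = 0 := (ZMod.intCast_zmod_eq_zero_iff_dvd _ _).mpr hs
  have hupper : ρ (upperSL ((v' * v - 1) ^ 2 * t)) = 1 := by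
    rw [map_upperSL_congr hT (b := 0) (by rw [Int.cast_mul, Int.cast_pow, hs']; simp),
      map_upperSL_eq_zpow, zpow_zero]
  have hρA : ρ A = ρ (lowerSL (-(v * v) * t)) := by
    rw [hc j A ht]
    change _ * ρ (upperSL ((v' * v - 1) ^ 2 * t)) = _
    rw [hupper, mul_one]
    rfl
  rw [SemiconjBy, ← map_mul, hA, map_mul, hρA]

lemma exists_coprime_cast_eq [NeZero N] (hUN : U.Coprime N) (v : (ZMod N)ˣ) :
    ∃ a : ℕ, (a : ZMod N) = v ∧ a.Coprime U ∧ a.Coprime N := by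
  obtain ⟨a, haU, haN⟩ := Nat.chineseRemainder hUN 1 (v : ZMod N).val
  have hav : (a : ZMod N) = v := by
    rw [(ZMod.natCast_eq_natCast_iff _ _ _).mpr haN, ZMod.natCast_zmod_val]
  refine ⟨a, hav, haU.gcd_eq.trans (Nat.gcd_one_left U), ?_⟩
  rw [← ZMod.isUnit_iff_coprime, hav]
  exact v.isUnit

lemma CornerInvariant.semiconj_weyl [NeZero N] (hc : CornerInvariant ρ U)
    (hT : ρ ModularGroup.T ^ N = 1) (hU : 1 < U) (hUN : U.Coprime N) (v : (ZMod N)ˣ)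
    (x : ZMod N) :
    SemiconjBy (ρ (upperSL (v : ZMod N).cast) * ρ (lowerSL (-↑v⁻¹ : ZMod N).cast) *
        ρ (upperSL (v : ZMod N).cast))
      (ρ (upperSL x.cast)) (ρ (lowerSL (-(↑v⁻¹ * ↑v⁻¹ * x) : ZMod N).cast)) := by
  obtain ⟨a, hav, haU, haN⟩ := exists_coprime_cast_eq hUN v⁻¹
  obtain ⟨s, t, v', j, hv', hs, ⟨b, c, hbc⟩, ht⟩ := exists_pow_eq_one_sub_mul hU haU.symm hUN haN
  have hv'v : (v : ZMod N) = v' := by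
    have h := congrArg (Int.cast : ℤ → ZMod N) hv'
    push_cast [(ZMod.intCast_zmod_eq_zero_iff_dvd _ _).mpr hs] at h
    rw [hav, add_zero, ← Units.eq_mul_inv_iff_mul_eq] at h
    simpa using h.symm
  have htb : (t * b : ZMod N) = 1 := by
    simpa [mul_comm] using congrArg (Int.cast : ℤ → ZMod N) hbc
  obtain ⟨x, rfl⟩ := ZMod.intCast_surjective x
  have hx : (x : ZMod N) = (t * (b * x) : ℤ) := by
    push_cast
    rw [← mul_assoc, htb, one_mul]
  have hlower : (-(↑v⁻¹ * ↑v⁻¹ * x) : ZMod N) = (-(a * a) * t * (b * x) : ℤ) := by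
    rw [hx, ← hav]
    push_cast
    ring
  have hneg : (-↑v⁻¹ : ZMod N) = (-a : ℤ) := by simp [hav]
  rw [hlower, hx, hneg, hv'v]
  simp only [map_upperSL_cast hT, map_lowerSL_cast hT]
  rw [map_upperSL_mul, map_lowerSL_mul, ← map_mul, ← map_mul]
  exact (hc.semiconj_of_mul_eq hT hv' hs ht).zpow_right _

/-- The elementary matrices mod `N`, lifted to `SL₂(ℤ)` and mapped by `ρ`. -/
def SteinbergData.ofCornerInvariant [NeZero N] (hc : CornerInvariant ρ U)
    (hT : ρ ModularGroup.T ^ N = 1) (hU : 1 < U) (hUN : U.Coprime N) :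
    SteinbergData (ZMod N) H where
  upper x := ρ (upperSL x.cast)
  lower x := ρ (lowerSL x.cast)
  upper_add x y := by
    rw [← map_mul, ← upperSL_add]
    exact map_upperSL_congr hT (by simp)
  lower_add x y := by
    rw [← map_mul, ← lowerSL_add]
    exact map_lowerSL_congr hT (by simp)
  weyl_semiconj := hc.semiconj_weyl hT hU hUN
  commute_upper_lower _ x y he := hc.commute hT hU he x y

end CornerInvariant

section CongruenceKernel

variable {H : Type*} [Group H] {ρ : SL(2, ℤ) →* H} {N p : ℕ} {θ : Monoid.End H} {γ : H}

lemma IsGaloisTwist.cornerInvariant (h : IsGaloisTwist ρ p θ γ) (hp : 1 < p) (hp' : p < 4)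
    {k : ℕ} (hγ : γ ^ k = 1) (hT : ρ ModularGroup.T ^ p ^ k = ρ ModularGroup.T) :
    CornerInvariant ρ (p ^ k) := by
  intro j A hA
  have hTj : ρ ModularGroup.T ^ p ^ (k * j) = ρ ModularGroup.T := by
    have hfix : Function.IsFixedPt (fun x : H => x ^ p ^ k) (ρ ModularGroup.T) := hT
    simpa only [pow_iterate, ← pow_mul] using (hfix.iterate j).eq
  have hj := h.pow (k * j)
  rw [pow_mul γ, hγ, one_pow] at hj
  refine hj.map_eq_of_apply_zero_zero (by positivity) (fun hAB => ?_) hTj ?_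
  · exact pow_map_of_mem_diagonalConj (by positivity) (h.map_of_mem_diagonalConj hp hp') (k * j)
      (by exact_mod_cast hAB)
  · rw [hA, pow_mul]
    push_cast
    rfl

/-- `D` consists of the images under `ρ` of integral elementary matrices, which thus only depend
on their entries mod `N`. -/
structure SteinbergData.IsReductionOf (D : SteinbergData (ZMod N) H) (ρ : SL(2, ℤ) →* H) :
    Prop where
  upper_intCast : ∀ a : ℤ, D.upper a = ρ (upperSL a)
  lower_intCast : ∀ a : ℤ, D.lower a = ρ (lowerSL a)

namespace SteinbergData.IsReductionOf

variable {D : SteinbergData (ZMod N) H} (hD : D.IsReductionOf ρ)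

include hD

lemma weyl_neg_one : D.weyl (-1) = ρ ModularGroup.S := by
  rw [S_eq_upperSL_mul_lowerSL_mul_upperSL, map_mul, map_mul, ← hD.upper_intCast,
    ← hD.lower_intCast]
  simp [weyl]

lemma torus_neg_one_mul_neg_one :
    D.torus (-1 * -1) = D.torus (-1) * D.torus (-1) := by
  have h : D.torus (-1) = ρ (-1) := by
    rw [torus, hD.weyl_neg_one, ← map_mul, S_mul_S]
  rw [h, ← map_mul, neg_one_mul, neg_neg, neg_one_mul, neg_neg, torus_one, map_one]

-- The image under `θ` of the relation `(S T)³ = S²`, solved for `γ`.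
lemma torus_inv_eq_inv (h : IsGaloisTwist ρ p θ γ) {P : (ZMod N)ˣ} (hP : (P : ZMod N) = p) :
    D.torus P⁻¹ = γ⁻¹ := by
  obtain ⟨b, hb⟩ := ZMod.intCast_surjective (P⁻¹ : (ZMod N)ˣ).val
  have hconj : γ * ρ (upperSL b) = ρ (upperSL p) * γ := by
    rw [(h.semiconj_upperSL b).eq, ← hD.upper_intCast, ← hD.upper_intCast]
    push_cast
    rw [hb, ← hP, sq, P.mul_inv_cancel_right]
  have hrel : ModularGroup.S * ModularGroup.T * (ModularGroup.S * ModularGroup.T) *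
      (ModularGroup.S * ModularGroup.T) = ModularGroup.S * ModularGroup.S :=
    coe_SL_injective (by simp [ModularGroup.coe_S, ModularGroup.coe_T])
  have hθ := congrArg (fun A => θ (ρ A)) hrel
  have hTp : ρ ModularGroup.T ^ p = ρ (upperSL p) := by
    rw [map_upperSL_eq_zpow, zpow_natCast]
  simp only [map_mul, h.map_S, h.map_T, hTp] at hθ
  have hS : ρ ModularGroup.S * ρ (upperSL p) = ρ (lowerSL (-p)) * ρ ModularGroup.S := by
    rw [← map_mul, S_mul_upperSL, map_mul]
  have htorus : D.torus P⁻¹ =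
      ρ (upperSL b) * ρ (lowerSL (-p)) * ρ (upperSL b) * ρ ModularGroup.S := by
    rw [torus, hD.weyl_neg_one, weyl, inv_inv, hP, ← hb, hD.upper_intCast, ← hD.lower_intCast]
    simp
  have hγS := h.twist_mul_S_mul_twist
  rw [htorus]
  set S := ρ ModularGroup.S
  set u := ρ (upperSL b)
  set l := ρ (lowerSL (-p))
  have hconjS : S * (u * S * γ * u * l) * S = S * 1 * S := calc
    _ = S * u * S * γ * u * (l * S) := by group
    _ = γ * S * (γ * u) * S * (γ * u) * (S * ρ (upperSL p)) := by
      nth_rw 1 [← hγS]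
      rw [hS]
      group
    _ = γ * S * γ * S := by
      rw [hconj, mul_assoc (γ * S) γ S, ← hθ]
      group
    _ = S * 1 * S := by rw [hγS, mul_one]
  have hinv : (u * S) * (γ * u * l) = 1 := by
    simpa only [mul_assoc] using mul_left_cancel (mul_right_cancel hconjS)
  refine eq_inv_of_mul_eq_one_right ?_
  simpa only [mul_assoc] using mul_eq_one_comm.mp hinv

lemma torus_mul_of_mem_zpowers (hN : N ≠ 0) (h : IsGaloisTwist ρ p θ γ) {P : (ZMod N)ˣ}
    (hP : (P : ZMod N) = p) : ∀ a ∈ Subgroup.zpowers P, ∀ b ∈ Subgroup.zpowers P,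
      D.torus (a * b) = D.torus a * D.torus b := by
  have : NeZero N := ⟨hN⟩
  have htorus (i : ℕ) : D.torus (P ^ i)⁻¹ = (γ ^ i)⁻¹ :=
    hD.torus_inv_eq_inv (h.pow i) (by simp [hP])
  have hinv {a : (ZMod N)ˣ} (ha : a ∈ Subgroup.zpowers P) : ∃ i : ℕ, a = (P ^ i)⁻¹ := by
    obtain ⟨i, hi⟩ := mem_powers_iff_mem_zpowers.mpr (inv_mem ha)
    exact ⟨i, inv_eq_iff_eq_inv.mp hi.symm⟩
  intro a ha b hb
  obtain ⟨i, rfl⟩ := hinv ha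
  obtain ⟨j, rfl⟩ := hinv hb
  rw [← mul_inv_rev, ← pow_add, htorus, htorus, htorus, pow_add, mul_inv_rev]

lemma Gamma_le_ker (hfac : D.Factors) : CongruenceSubgroup.Gamma N ≤ ρ.ker := by
  obtain ⟨φ, -, hupper, hlower⟩ := hfac
  let red := Matrix.SpecialLinearGroup.map (n := Fin 2) (Int.castRingHom (ZMod N))
  have hu (a : ℤ) : φ (red (upperSL a)) = ρ (upperSL a) := by
    rw [map_upperSL, hupper, eq_intCast, hD.upper_intCast]
  have hl (a : ℤ) : φ (red (lowerSL a)) = ρ (lowerSL a) := by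
    rw [map_lowerSL, hlower, eq_intCast, hD.lower_intCast]
  have hφ : φ.comp red = ρ := by
    refine hom_ext_S_T ?_ (hu 1)
    simp only [S_eq_upperSL_mul_lowerSL_mul_upperSL, MonoidHom.comp_apply, map_mul, hu, hl]
  rw [← hφ, ← MonoidHom.comap_ker]
  exact Subgroup.ker_le_comap ..

end SteinbergData.IsReductionOf

lemma SteinbergData.isReductionOf_ofCornerInvariant [NeZero N] {U : ℕ} (hc : CornerInvariant ρ U)
    (hT : ρ ModularGroup.T ^ N = 1) (hU : 1 < U) (hUN : U.Coprime N) :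
    (SteinbergData.ofCornerInvariant hc hT hU hUN).IsReductionOf ρ :=
  ⟨map_upperSL_cast hT, map_lowerSL_cast hT⟩

theorem IsGaloisTwist.Gamma_le_ker (h : IsGaloisTwist ρ p θ γ) (hp : p = 2 ∨ p = 3)
    (hγ : IsOfFinOrder γ) (hT : ρ ModularGroup.T ^ N = 1) (hpN : ¬ p ∣ N) :
    CongruenceSubgroup.Gamma N ≤ ρ.ker := by
  have hN : N ≠ 0 := by rintro rfl; exact hpN (dvd_zero p)
  have : NeZero N := ⟨hN⟩
  have hprime : p.Prime := by rcases hp with rfl | rfl <;> decide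
  have hcop : p.Coprime N := hprime.coprime_iff_not_dvd.mpr hpN
  set k := orderOf γ * N.totient with hk_def
  have hk : k ≠ 0 := mul_ne_zero hγ.orderOf_pos.ne' (Nat.totient_pos.mpr hN.bot_lt).ne'
  have hmod : p ^ k ≡ 1 [MOD N] := by
    rw [hk_def, mul_comm, pow_mul]
    simpa using (Nat.ModEq.pow_totient hcop).pow (orderOf γ)
  have hTk : ρ ModularGroup.T ^ p ^ k = ρ ModularGroup.T := by
    conv_rhs => rw [← pow_one (ρ ModularGroup.T)]
    exact pow_eq_pow_iff_modEq.mpr (hmod.of_dvd (orderOf_dvd_of_pow_eq_one hT))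
  have hγk : γ ^ k = 1 := by rw [hk_def, pow_mul, pow_orderOf_eq_one, one_pow]
  have hcorner : CornerInvariant ρ (p ^ k) :=
    h.cornerInvariant hprime.one_lt (by omega) hγk hTk
  have hD := SteinbergData.isReductionOf_ofCornerInvariant hcorner hT
    (Nat.one_lt_pow hk hprime.one_lt) (hcop.pow_left k)
  refine hD.Gamma_le_ker ?_
  rcases hp with rfl | rfl
  · exact SteinbergData.factors_of_odd (Nat.odd_iff.mpr (by omega)) _
  · have hP : (ZMod.unitOfCoprime 3 hcop : ZMod N) = (3 : ℕ) := ZMod.coe_unitOfCoprime 3 hcop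
    exact SteinbergData.factors_of_torus_mul_of_mem_zpowers_three hN _ (mod_cast hP)
      (hD.torus_mul_of_mem_zpowers hN h hP) hD.torus_neg_one_mul_neg_one

end CongruenceKernel

section SignedPermutation

variable {Φ : Type*} [DecidableEq Φ] {R : Type*} [CommRing R]

/-- The signed permutation matrix whose only nonzero entry in row `a` is `ε a`, in column `g a`. -/
def signedPermMatrix (R : Type*) [CommRing R] (ε : Φ → ℤˣ) (g : Equiv.Perm Φ) : Matrix Φ Φ R :=
  Matrix.of fun a b => if g a = b then ((ε a : ℤ) : R) else 0

lemma signedPermMatrix_one : signedPermMatrix R (1 : Φ → ℤˣ) 1 = 1 := by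
  ext a b
  simp [signedPermMatrix, Matrix.one_apply]

variable [Fintype Φ]

lemma signedPermMatrix_mul_apply (ε : Φ → ℤˣ) (g : Equiv.Perm Φ) (X : Matrix Φ Φ R) (a b : Φ) :
    (signedPermMatrix R ε g * X) a b = (ε a : ℤ) * X (g a) b := by
  simp [signedPermMatrix, Matrix.mul_apply]

lemma mul_signedPermMatrix_apply (X : Matrix Φ Φ R) (ε : Φ → ℤˣ) (g : Equiv.Perm Φ) (a b : Φ) :
    (X * signedPermMatrix R ε g) a b = X a (g⁻¹ b) * (ε (g⁻¹ b) : ℤ) := by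
  simp [signedPermMatrix, Matrix.mul_apply, ← Equiv.Perm.eq_inv_iff_eq]

lemma signedPermMatrix_mul (ε δ : Φ → ℤˣ) (g h : Equiv.Perm Φ) :
    signedPermMatrix R ε g * signedPermMatrix R δ h =
      signedPermMatrix R (ε * δ ∘ g) (h * g) := by
  ext a b
  rw [signedPermMatrix_mul_apply]
  simp [signedPermMatrix]

/-- `signedPermMatrix` as an invertible matrix. -/
def signedPermGL (R : Type*) [CommRing R] (ε : Φ → ℤˣ) (g : Equiv.Perm Φ) :
    Matrix.GeneralLinearGroup Φ R where
  val := signedPermMatrix R ε g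
  inv := signedPermMatrix R (ε ∘ ⇑g⁻¹) g⁻¹
  val_inv := by
    rw [signedPermMatrix_mul, inv_mul_cancel, ← signedPermMatrix_one]
    congr 1
    ext a
    simp [Int.units_mul_self]
  inv_val := by
    rw [signedPermMatrix_mul, mul_inv_cancel, ← signedPermMatrix_one]
    congr 1
    ext a
    simp [Int.units_mul_self]

lemma isOfFinOrder_signedPermGL (ε : Φ → ℤˣ) (g : Equiv.Perm Φ) :
    IsOfFinOrder (signedPermGL R ε g) := by
  let signedPerms : Submonoid (Matrix.GeneralLinearGroup Φ R) :=
    { carrier := Set.range fun P : (Φ → ℤˣ) × Equiv.Perm Φ => signedPermGL R P.1 P.2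
      one_mem' := ⟨1, Units.ext signedPermMatrix_one⟩
      mul_mem' := by
        rintro _ _ ⟨P, rfl⟩ ⟨Q, rfl⟩
        exact ⟨(P.1 * Q.1 ∘ P.2, Q.2 * P.2), Units.ext (signedPermMatrix_mul ..).symm⟩ }
  have hpowers : Submonoid.powers (signedPermGL R ε g) ≤ signedPerms :=
    Submonoid.powers_le.mpr ⟨(ε, g), rfl⟩
  exact finite_powers.mp ((Set.finite_range _).subset hpowers)

lemma isGaloisTwist_signedPermGL {ρ : SL(2, ℤ) →* Matrix.GeneralLinearGroup Φ R}
    {S : Matrix Φ Φ R} (hS : (ρ ModularGroup.S : Matrix Φ Φ R) = S) {t : Φ → R}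
    (hT : (ρ ModularGroup.T : Matrix Φ Φ R) = Matrix.diagonal t) {p : ℕ} {g : Equiv.Perm Φ}
    {ε : Φ → ℤˣ} {τ : R →+* R} (hτ_left : ∀ a b, τ (S a b) = (ε a : ℤ) * S (g a) b)
    (hτ_right : ∀ a b, τ (S a b) = (ε b : ℤ) * S a (g b)) (hτt : ∀ a, τ (t a) = t a ^ p)
    (hgt : ∀ a, t (g a) = t a ^ p ^ 2) :
    IsGaloisTwist ρ p (Matrix.GeneralLinearGroup.map τ) (signedPermGL R ε g) where
  map_T := by
    refine Units.ext ?_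
    change (ρ ModularGroup.T : Matrix Φ Φ R).map τ = (ρ ModularGroup.T : Matrix Φ Φ R) ^ p
    rw [hT, Matrix.diagonal_map (map_zero τ), Matrix.diagonal_pow]
    exact congrArg Matrix.diagonal (funext hτt)
  map_S := by
    ext a b
    change τ ((ρ ModularGroup.S : Matrix Φ Φ R) a b) =
      (signedPermMatrix R ε g * (ρ ModularGroup.S : Matrix Φ Φ R)) a b
    rw [signedPermMatrix_mul_apply, hS, hτ_left]
  map_twist := by
    ext a b
    change τ (if g a = b then ((ε a : ℤ) : R) else 0) = if g a = b then ((ε a : ℤ) : R) else 0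
    rw [apply_ite τ, map_intCast, map_zero]
  twist_mul_S_mul_twist := by
    rw [← eq_mul_inv_iff_mul_eq]
    ext a b
    change (signedPermMatrix R ε g * (ρ ModularGroup.S : Matrix Φ Φ R)) a b =
      ((ρ ModularGroup.S : Matrix Φ Φ R) * signedPermMatrix R (ε ∘ ⇑g⁻¹) g⁻¹) a b
    rw [signedPermMatrix_mul_apply, mul_signedPermMatrix_apply, hS, ← hτ_left, hτ_right, mul_comm]
    simp
  semiconj_T := by
    refine Units.ext ?_
    change signedPermMatrix R ε g * (ρ ModularGroup.T : Matrix Φ Φ R) =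
      (ρ ModularGroup.T : Matrix Φ Φ R) ^ p ^ 2 * signedPermMatrix R ε g
    ext a b
    rw [hT, Matrix.diagonal_pow, Matrix.diagonal_mul, signedPermMatrix_mul_apply]
    by_cases hab : g a = b
    · simp [signedPermMatrix, hab, ← hgt, mul_comm]
    · simp [signedPermMatrix, hab]

end SignedPermutation

theorem modularData_congruence_subgroup_general {Φ : Type*} [Fintype Φ] [DecidableEq Φ]
    {R : Type*} [CommRing R] {ρ : SL(2, ℤ) →* Matrix.GeneralLinearGroup Φ R}
    {S : Matrix Φ Φ R} (hS : (ρ ModularGroup.S : Matrix Φ Φ R) = S) {t : Φ → R}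
    (hT : (ρ ModularGroup.T : Matrix Φ Φ R) = Matrix.diagonal t) {n : ℕ} (htn : t ^ n = 1)
    {p : ℕ} (hp : p = 2 ∨ p = 3) (hpn : ¬ p ∣ n) {g : Equiv.Perm Φ} {ε : Φ → ℤˣ} {τ : R →+* R}
    (hτ_left : ∀ a b, τ (S a b) = (ε a : ℤ) * S (g a) b)
    (hτ_right : ∀ a b, τ (S a b) = (ε b : ℤ) * S a (g b)) (hτt : ∀ a, τ (t a) = t a ^ p)
    (hgt : ∀ a, t (g a) = t a ^ p ^ 2) :
    CongruenceSubgroup.Gamma n ≤ ρ.ker := by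
  have hTn : ρ ModularGroup.T ^ n = 1 := Units.ext <| by
    rw [Units.val_pow_eq_pow_val, hT, Matrix.diagonal_pow, htn, Units.val_one]
    exact Matrix.diagonal_one
  exact (isGaloisTwist_signedPermGL hS hT hτ_left hτ_right hτt hgt).Gamma_le_ker hp
    (isOfFinOrder_signedPermGL ε g) hTn hpn

lemma mem_Gamma_iff_forall_modEq {n : ℕ} {A : SL(2, ℤ)} :
    A ∈ CongruenceSubgroup.Gamma n ↔
      ∀ i j, A i j ≡ (1 : Matrix (Fin 2) (Fin 2) ℤ) i j [ZMOD n] := by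
  simp [CongruenceSubgroup.Gamma_mem, Fin.forall_fin_two, ← ZMod.intCast_eq_intCast_iff, and_assoc]

/-- congruence subgroup criterion. Let `(S,T)` be modular data, `N` the
exact order of `T`, and `ρ : SL₂(ℤ) → GL(Φ,ℂ)` the representation sending the standard
generators to `S` and `T`. If `p ∈ {2,3}` does not divide `N` and there are a permutation `g`
of `Φ`, signs `ε`, and a ring automorphism `τ` of `ℂ` with
`τ (S a b) = ε a · S (g a) b = ε b · S a (g b)`, `τ (T a a) = T a a ^ p`, and
`T (g a) (g a) = T a a ^ (p²)`, then `ρ A = 1` for every `A ∈ SL₂(ℤ)` with `A ≡ I (mod N)`;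
i.e. `ρ` factors through `Γ(N)` and defines a representation of `SL₂(ℤ/Nℤ)`. -/
theorem modularData_congruence_subgroup
    {Φ : Type} [Fintype Φ] [DecidableEq Φ] (M : ModularData Φ)
    (n : ℕ) (hn : 0 < n) (hTn : M.T ^ n = 1)
    (hmin : ∀ m : ℕ, 0 < m → M.T ^ m = 1 → n ≤ m)
    (ρ : Matrix.SpecialLinearGroup (Fin 2) ℤ →* Matrix.GeneralLinearGroup Φ ℂ)
    (hρS : ((ρ ⟨!![0, -1; 1, 0], by norm_num [Matrix.det_fin_two_of]⟩ :
        Matrix.GeneralLinearGroup Φ ℂ) : Matrix Φ Φ ℂ) = M.S)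
    (hρT : ((ρ ⟨!![1, 1; 0, 1], by norm_num [Matrix.det_fin_two_of]⟩ :
        Matrix.GeneralLinearGroup Φ ℂ) : Matrix Φ Φ ℂ) = M.T)
    (p : ℕ) (hp : p = 2 ∨ p = 3) (hpn : ¬ p ∣ n)
    (g : Equiv.Perm Φ) (ε : Φ → ℂ) (hε : ∀ a, ε a = 1 ∨ ε a = -1)
    (τ : ℂ ≃+* ℂ)
    (hτS : ∀ a b, τ (M.S a b) = ε a * M.S (g a) b ∧ τ (M.S a b) = ε b * M.S a (g b))
    (hτT : ∀ a, τ (M.T a a) = M.T a a ^ p)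
    (hgT : ∀ a, M.T (g a) (g a) = M.T a a ^ (p ^ 2)) :
    ∀ A : Matrix.SpecialLinearGroup (Fin 2) ℤ,
      (∀ i j, ((A : Matrix (Fin 2) (Fin 2) ℤ) i j) ≡
        ((1 : Matrix (Fin 2) (Fin 2) ℤ) i j) [ZMOD (n : ℤ)]) →
      ρ A = 1 := by
  intro A hA
  have hε' (a : Φ) : ∃ u : ℤˣ, ε a = (u : ℤ) := by
    rcases hε a with h | h
    exacts [⟨1, by simp [h]⟩, ⟨-1, by simp [h]⟩]
  choose sign hsign using hε'
  simp only [hsign] at hτS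
  have hT : M.T = Matrix.diagonal M.T.diag :=
    ((Matrix.isDiag_iff_diagonal_diag _).mp M.T_diag).symm
  have htn : M.T.diag ^ n = 1 := by
    rw [hT, Matrix.diagonal_pow] at hTn
    exact Matrix.diagonal_injective (hTn.trans Matrix.diagonal_one.symm)
  exact modularData_congruence_subgroup_general hρS (hρT.trans hT) htn hp hpn (τ := τ)
    (fun a b => (hτS a b).1) (fun a b => (hτS a b).2) hτT hgT (mem_Gamma_iff_forall_modEq.mpr hA)
end

section
/- Let (S,T) be modular data on Φ. Then for all a, b ∈ Φ, the b-th column of S is an eigenvector of the fusion matrix N_a with eigenvalue S_{ab}/S_{0b}, i.e. ∑_{c∈Φ} N_{ae}^c S_{cb} = (S_{ab}/S_{0b}) S_{eb} for all e ∈ Φ. Moreover the simultaneous eigenspaces are one-dimensional in the following sense: if b, c ∈ Φ satisfy S_{ab}/S_{0b} = S_{ac}/S_{0c} for all a ∈ Φ, then b = c. -/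
open scoped BigOperators
open Complex

/-!
Verlinde's formula says `N_a = S D_a Sᴴ`, where `D_a` is the diagonal matrix with entries
`S a d / S 0 d`. As `Sᴴ` is a left inverse of `S`, this gives `N_a S = S D_a`, so the columns of `S`
are common eigenvectors. If two of them had the same eigenvalues, then dividing each by its nonzero
`0`-th entry would give the same vector twice, although the columns are linearly independent.
-/

open Matrix

section Verlinde

variable {m n K : Type*}

theorem injective_div_of_linearIndependent_col [Field K] {S : Matrix m n K}
    (hS : LinearIndependent K S.col) {w : n → K} (hw : ∀ b, w b ≠ 0) :
    Function.Injective fun b a ↦ S a b / w b := by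
  have hscaled := (hS.units_smul fun b ↦ (Units.mk0 (w b) (hw b))⁻¹).injective
  convert hscaled using 3
  simp [div_eq_inv_mul, Units.smul_def]

theorem linearIndependent_col_of_mul_eq_one [Fintype m] [DecidableEq n] [CommSemiring K]
    {S : Matrix m n K} {R : Matrix n m K} (hRS : R * S = 1) : LinearIndependent K S.col := by
  have himage : R.mulVecLin ∘ S.col = fun b ↦ Pi.single b 1 := by
    funext b
    calc R *ᵥ S.col b = (R * S).col b := rfl
      _ = Pi.single b 1 := by
        ext a
        simp [hRS, one_apply, Pi.single_apply]
  exact .of_comp R.mulVecLin (himage ▸ Pi.linearIndependent_single_one n K)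

theorem mul_diagonal_mul_mulVec_col [Fintype m] [Fintype n] [DecidableEq n] [CommSemiring K]
    {S : Matrix m n K} {R : Matrix n m K} (hRS : R * S = 1) (v : n → K) (b : n) :
    (S * diagonal v * R) *ᵥ S.col b = v b • S.col b :=
  calc (S * diagonal v * R) *ᵥ S.col b
    _ = (S * diagonal v * R * S).col b := rfl
    _ = (S * diagonal v).col b := by rw [Matrix.mul_assoc, hRS, Matrix.mul_one]
    _ = v b • S.col b := by
      ext a
      simp [mul_comm]

variable [Field K] [Fintype n] [DecidableEq n]

/-- The matrix of Verlinde coefficients attached to the row `a` of `S`, with `z` the distinguished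
row. For the `S`-matrix of modular data with unit object `z`, and `R = Sᴴ`, it is the fusion matrix
of `a`. Keeping `R` as a separate argument allows any left inverse of `S`, and `S` need not be
square. -/
def verlindeMatrix (S : Matrix m n K) (R : Matrix n m K) (z a : m) : Matrix m m K :=
  S * diagonal (fun d ↦ S a d / S z d) * R

theorem verlindeMatrix_apply (S : Matrix m n K) (R : Matrix n m K) (z a b c : m) :
    verlindeMatrix S R z a b c = ∑ d, S a d * S b d * R d c / S z d := by
  rw [verlindeMatrix, mul_apply]
  refine Finset.sum_congr rfl fun d _ ↦ ?_
  rw [mul_diagonal]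
  ring

theorem modularData_columns_eigenvectors_general [Fintype m] {S : Matrix m n K}
    {R : Matrix n m K} (hRS : R * S = 1) {z : m} (hz : ∀ b, S z b ≠ 0) :
    (∀ a b e, ∑ c, verlindeMatrix S R z a e c * S c b = S a b / S z b * S e b) ∧
    (∀ b c, (∀ a, S a b / S z b = S a c / S z c) → b = c) :=
  ⟨fun a b e ↦ congrFun (mul_diagonal_mul_mulVec_col hRS (fun d ↦ S a d / S z d) b) e,
    fun _ _ h ↦ injective_div_of_linearIndependent_col
      (linearIndependent_col_of_mul_eq_one hRS) hz (funext h)⟩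

end Verlinde

namespace ModularData

variable {Φ : Type} [Fintype Φ] [DecidableEq Φ] (M : ModularData Φ)

theorem S_zero_ne_zero (a : Φ) : M.S M.zero a ≠ 0 :=
  fun h ↦ (M.S_zero_pos a).2.ne' (by rw [h, zero_re])

theorem conjTranspose_S_mul_S : M.Sᴴ * M.S = 1 :=
  mul_eq_one_comm.mp M.S_unitary

theorem natCast_N (a b c : Φ) : (M.N a b c : ℂ) = verlindeMatrix M.S M.Sᴴ M.zero a b c := by
  simp only [M.verlinde, verlindeMatrix_apply, conjTranspose_apply, starRingEnd_apply]

end ModularData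

/-- Each column of `S` is a simultaneous eigenvector of the fusion matrices
`(N_a)_{e c} = N a e c`, with eigenvalue `S a b / S 0 b`; and the simultaneous eigenspaces are
one-dimensional: columns with identical eigenvalue ratios coincide. -/
theorem modularData_columns_eigenvectors
    {Φ : Type} [Fintype Φ] [DecidableEq Φ] (M : ModularData Φ) :
    (∀ a b e, ∑ c, (M.N a e c : ℂ) * M.S c b = (M.S a b / M.S M.zero b) * M.S e b) ∧
    (∀ b c, (∀ a, M.S a b / M.S M.zero b = M.S a c / M.S M.zero c) → b = c) := by
  simp only [M.natCast_N]
  exact modularData_columns_eigenvectors_general M.conjTranspose_S_mul_S M.S_zero_ne_zero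
end
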